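/- arXiv:1406.2988 — 6 statements merged into one kernel-verified Lean document; each statement's English description precedes it below -/
import Mathlib

section
/- Let ℓ, m be natural numbers with 18 ≤ ℓ ≤ m, and let k satisfy 2 ≤ k ≤ ℓm/2. Define n = 2⌊(ℓ−8)/2⌋ if ℓm is even, and n = 2⌊(ℓ−8)/2⌋ − 1 if ℓm is odd, and set v = min(k, n²/2) as a real number. Then p_k(ℓ,m) − p_{k−1}(ℓ,m) ≥ C · 2^{√v} / v^{9/4}, where C = 3√3/(√2·π²). -/
/-- `rectPartitions k l m` is the number of integer partitions of `k` fitting in an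
`l × m` rectangle: at most `l` parts, each part at most `m`. -/
noncomputable def rectPartitions (k l m : ℕ) : ℕ :=
  Nat.card {π : Nat.Partition k // Multiset.card π.parts ≤ l ∧ ∀ i ∈ π.parts, i ≤ m}

/-! ### Abstract `sl₂` lemmas -/
section AbstractSl2

variable {V : Type*} [AddCommGroup V] [Module ℝ V]

/-- A graded `sl₂`-module (one homogeneous piece), graded by `k`, of weight `N - 2k`. -/
structure Sl2Data (A : ℕ → Submodule ℝ V) (E F : V →ₗ[ℝ] V) (N : ℕ) : Prop where
  hE : ∀ k, ∀ v ∈ A (k + 1), E v ∈ A k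
  hE0 : ∀ v ∈ A 0, E v = 0
  hF : ∀ k, ∀ v ∈ A k, F v ∈ A (k + 1)
  hH : ∀ k, ∀ v ∈ A k, E (F v) = F (E v) + ((N : ℝ) - 2 * k) • v
  hN : ∀ k, N < k → ∀ v ∈ A k, v = 0

variable {A : ℕ → Submodule ℝ V} {E F : V →ₗ[ℝ] V} {N : ℕ}

theorem Sl2Data.Epow (h : Sl2Data A E F N) (r k : ℕ) (v : V) (hv : v ∈ A k) :
    (r ≤ k → (E ^ r) v ∈ A (k - r)) ∧ (k < r → (E ^ r) v = 0) := by
  induction r with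
  | zero => simpa using hv
  | succ r ih =>
    rw [pow_succ', Module.End.mul_apply]
    refine ⟨fun hr => ?_, fun hr => ?_⟩
    · have h1 := ih.1 (by omega)
      apply h.hE
      rwa [show k - (r + 1) + 1 = k - r by omega]
    · rcases Nat.lt_or_ge k r with hk | hk
      · rw [ih.2 hk, map_zero]
      · have : k = r := by omega
        subst this
        have h1 := ih.1 le_rfl
        rw [Nat.sub_self] at h1
        exact h.hE0 _ h1

theorem Sl2Data.Fpow (h : Sl2Data A E F N) (r k : ℕ) (v : V) (hv : v ∈ A k) :
    (F ^ r) v ∈ A (k + r) := by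
  induction r with
  | zero => simpa using hv
  | succ r ih =>
    rw [pow_succ', Module.End.mul_apply]
    exact h.hF _ _ ih

theorem Sl2Data.EpowF (h : Sl2Data A E F N) (r k : ℕ) (v : V) (hv : v ∈ A k) :
    (E ^ (r + 1)) (F v) = F ((E ^ (r + 1)) v) +
      (((r : ℝ) + 1) * ((N : ℝ) - 2 * k + r)) • (E ^ r) v := by
  induction r with
  | zero => simp [h.hH k v hv]
  | succ r ih =>
    have key : E (F ((E ^ (r + 1)) v)) = F ((E ^ (r + 2)) v) +
        ((N : ℝ) - 2 * k + 2 * (r + 1)) • (E ^ (r + 1)) v := by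
      have hp := h.Epow (r + 1) k v hv
      rcases Nat.lt_or_ge k (r + 1) with hk | hk
      · have h0 := hp.2 hk
        rw [pow_succ' E (r + 1), Module.End.mul_apply, h0]
        simp
      · have h1 := h.hH _ _ (hp.1 hk)
        rw [h1, pow_succ' E (r + 1), Module.End.mul_apply]
        congr 2
        rw [Nat.cast_sub hk]
        push_cast
        ring
    have e1 : (E ^ (r + 1 + 1)) (F v) = E ((E ^ (r + 1)) (F v)) := by
      rw [pow_succ', Module.End.mul_apply]
    rw [e1, ih, map_add, map_smul, key]
    have e2 : E ((E ^ r) v) = (E ^ (r + 1)) v := by rw [pow_succ', Module.End.mul_apply]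
    rw [e2, add_assoc, ← add_smul]
    congr 2
    push_cast
    ring

theorem Sl2Data.EFpow (h : Sl2Data A E F N) (r k : ℕ) (v : V) (hv : v ∈ A k) (h0 : E v = 0) :
    E ((F ^ (r + 1)) v) = (((r : ℝ) + 1) * ((N : ℝ) - 2 * k - r)) • (F ^ r) v := by
  induction r with
  | zero => simp [h.hH k v hv, h0]
  | succ r ih =>
    rw [pow_succ' F (r + 1), Module.End.mul_apply, h.hH _ _ (h.Fpow (r + 1) k v hv), ih, map_smul,
      ← Module.End.mul_apply, ← pow_succ', ← add_smul]
    congr 1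
    push_cast
    ring

/-- `E` is surjective onto positive weight spaces. -/
theorem Sl2Data.surj (h : Sl2Data A E F N) (k : ℕ) (hk : 2 * k < N) (v : V) (hv : v ∈ A k) :
    ∃ u ∈ A (k + 1), E u = v := by
  have key : ∀ r, ∀ v ∈ A k, (E ^ r) v = 0 → ∃ u ∈ A (k + 1), E u = v := by
    intro r
    induction r with
    | zero =>
      intro v hv h0
      refine ⟨0, Submodule.zero_mem _, ?_⟩
      simpa using h0.symm
    | succ r ih =>
      intro v hv h0
      have hc := h.EpowF r k v hv
      rw [h0, map_zero, zero_add] at hc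
      set c : ℝ := ((r : ℝ) + 1) * ((N : ℝ) - 2 * k + r) with hcdef
      have hk' : (2 : ℝ) * k < N := by exact_mod_cast hk
      have hcpos : 0 < c := by
        have : (0 : ℝ) ≤ r := Nat.cast_nonneg r
        apply mul_pos <;> linarith
      have hF : F v ∈ A (k + 1) := h.hF _ _ hv
      obtain ⟨u, hu, hu2⟩ := ih (E (F v) - c • v)
        (Submodule.sub_mem _ (h.hE _ _ hF) (Submodule.smul_mem _ _ hv)) (by
          rw [map_sub, map_smul, ← Module.End.mul_apply, ← pow_succ, hc, sub_self])
      refine ⟨c⁻¹ • (F v - u), Submodule.smul_mem _ _ (Submodule.sub_mem _ hF hu), ?_⟩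
      rw [map_smul, map_sub, hu2, sub_sub_cancel, smul_smul, inv_mul_cancel₀ hcpos.ne', one_smul]
  exact key (k + 1) v hv ((h.Epow (k + 1) k v hv).2 (by omega))

/-- `E` is injective on negative weight spaces. -/
theorem Sl2Data.inj (h : Sl2Data A E F N) (k : ℕ) (hk : N < 2 * k) (v : V) (hv : v ∈ A k)
    (h0 : E v = 0) : v = 0 := by
  have key : ∀ r, (F ^ r) v = 0 → v = 0 := by
    intro r
    induction r with
    | zero => intro h1; simpa using h1
    | succ r ih =>
      intro h1
      apply ih
      have h2 := h.EFpow r k v hv h0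
      rw [h1, map_zero] at h2
      rcases smul_eq_zero.mp h2.symm with h3 | h3
      · exfalso
        have hk' : (N : ℝ) < 2 * k := by exact_mod_cast hk
        have hr : (0 : ℝ) ≤ r := Nat.cast_nonneg r
        rcases mul_eq_zero.mp h3 with h4 | h4 <;> linarith
      · exact h3
  exact key (N + 1) (h.hN (k + (N + 1)) (by omega) _ (h.Fpow _ _ _ hv))

theorem Sl2Data.Fvanish (h : Sl2Data A E F N) (k w : ℕ) (hk : 2 * k + w = N) (v : V) (hv : v ∈ A k)
    (h0 : E v = 0) : (F ^ (w + 1)) v = 0 := by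
  apply h.inj (k + (w + 1)) (by omega) _ (h.Fpow _ _ _ hv)
  rw [h.EFpow w k v hv h0]
  have : (N : ℝ) - 2 * k - w = 0 := by
    have : (2 : ℝ) * k + w = N := by exact_mod_cast hk
    linarith
  rw [this]; simp

end AbstractSl2
/-! ### The polynomial ring and its `sl₂` action -/
section PolyModel
open MvPolynomial

/-- bidegree of the variable `x_i` -/
def wtv (L : ℕ) : Fin (L + 1) → ℕ × ℕ := fun i => (1, (i : ℕ))

/-- the polynomials of degree `d` and weight `k` in `x_0, …, x_L` -/
noncomputable def Apiece (L d k : ℕ) : Submodule ℝ (MvPolynomial (Fin (L + 1)) ℝ) :=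
  weightedHomogeneousSubmodule ℝ (wtv L) (d, k)

/-- the variable `x_j` (zero if out of range) -/
noncomputable def xvar (L j : ℕ) : MvPolynomial (Fin (L + 1)) ℝ :=
  if h : j < L + 1 then X ⟨j, h⟩ else 0

noncomputable def Eder (L : ℕ) :
    Derivation ℝ (MvPolynomial (Fin (L + 1)) ℝ) (MvPolynomial (Fin (L + 1)) ℝ) :=
  mkDerivation ℝ (fun i => ((i : ℕ) : ℝ) • xvar L ((i : ℕ) - 1))

noncomputable def Fder (L : ℕ) :
    Derivation ℝ (MvPolynomial (Fin (L + 1)) ℝ) (MvPolynomial (Fin (L + 1)) ℝ) :=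
  mkDerivation ℝ (fun i => ((L : ℝ) - ((i : ℕ) : ℝ)) • xvar L ((i : ℕ) + 1))

theorem xvar_hom (L j : ℕ) : IsWeightedHomogeneous (wtv L) (xvar L j) (1, j) := by
  unfold xvar
  split_ifs with h
  · exact isWeightedHomogeneous_X ℝ (wtv L) ⟨j, h⟩
  · exact isWeightedHomogeneous_zero _ _ _

theorem weight_split (L : ℕ) (s : Fin (L + 1) →₀ ℕ) (i : Fin (L + 1)) (hi : s i ≠ 0) :
    Finsupp.weight (wtv L) s =
      Finsupp.weight (wtv L) (s - Finsupp.single i 1) + (1, (i : ℕ)) := by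
  have h : s = (s - Finsupp.single i 1) + Finsupp.single i 1 := by
    rw [tsub_add_cancel_of_le]
    simpa [Finsupp.single_le_iff] using Nat.one_le_iff_ne_zero.mpr hi
  conv_lhs => rw [h]
  rw [map_add]
  congr 1
  simp [Finsupp.weight_single, wtv]

theorem Eder_mem (L d k : ℕ) (p) (hp : p ∈ Apiece L d (k + 1)) : Eder L p ∈ Apiece L d k := by
  refine IsWeightedHomogeneous.induction_on (motive := fun p _ => Eder L p ∈ Apiece L d k)
    ?_ ?_ ?_ hp
  · simp
  · intro p q _ _ h1 h2
    rw [map_add]; exact Submodule.add_mem _ h1 h2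
  · intro s r hs
    rw [Eder, mkDerivation_monomial]
    apply Submodule.smul_mem
    rw [Finsupp.sum]
    apply Submodule.sum_mem
    intro i hi
    rw [Finsupp.mem_support_iff] at hi
    have h1 := weight_split L s i hi
    rw [smul_eq_mul, mul_smul_comm]
    rcases Nat.eq_zero_or_pos (i : ℕ) with h0 | h0
    · rw [h0]; simp
    · apply Submodule.smul_mem
      have h2 := (isWeightedHomogeneous_monomial (wtv L) (s - Finsupp.single i 1)
        ((s i : ℕ) : ℝ) rfl).mul (xvar_hom L ((i : ℕ) - 1))
      have h3 : Finsupp.weight (wtv L) (s - Finsupp.single i 1) + (1, (i : ℕ) - 1) = (d, k) := by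
        rw [hs] at h1
        generalize Finsupp.weight (wtv L) (s - Finsupp.single i 1) = u at h1 ⊢
        obtain ⟨u1, u2⟩ := u
        simp only [Prod.mk_add_mk, Prod.mk.injEq] at h1 ⊢
        omega
      rw [h3] at h2
      exact h2

theorem Eder_zero (L d : ℕ) (p) (hp : p ∈ Apiece L d 0) : Eder L p = 0 := by
  refine IsWeightedHomogeneous.induction_on (motive := fun p _ => Eder L p = 0)
    ?_ ?_ ?_ hp
  · simp
  · intro p q _ _ h1 h2
    rw [map_add, h1, h2, add_zero]
  · intro s r hs
    rw [Eder, mkDerivation_monomial, Finsupp.sum, Finset.sum_eq_zero, smul_zero]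
    intro i hi
    rw [Finsupp.mem_support_iff] at hi
    have h1 := weight_split L s i hi
    have h0 : (i : ℕ) = 0 := by
      rw [hs] at h1
      generalize Finsupp.weight (wtv L) (s - Finsupp.single i 1) = u at h1
      obtain ⟨u1, u2⟩ := u
      simp only [Prod.mk_add_mk, Prod.mk.injEq] at h1
      omega
    rw [h0]; simp

theorem Fder_mem (L d k : ℕ) (p) (hp : p ∈ Apiece L d k) : Fder L p ∈ Apiece L d (k + 1) := by
  refine IsWeightedHomogeneous.induction_on (motive := fun p _ => Fder L p ∈ Apiece L d (k + 1))
    ?_ ?_ ?_ hp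
  · simp
  · intro p q _ _ h1 h2
    rw [map_add]; exact Submodule.add_mem _ h1 h2
  · intro s r hs
    rw [Fder, mkDerivation_monomial]
    apply Submodule.smul_mem
    rw [Finsupp.sum]
    apply Submodule.sum_mem
    intro i hi
    rw [Finsupp.mem_support_iff] at hi
    have h1 := weight_split L s i hi
    rw [smul_eq_mul, mul_smul_comm]
    apply Submodule.smul_mem
    have h2 := (isWeightedHomogeneous_monomial (wtv L) (s - Finsupp.single i 1)
      ((s i : ℕ) : ℝ) rfl).mul (xvar_hom L ((i : ℕ) + 1))
    have h3 : Finsupp.weight (wtv L) (s - Finsupp.single i 1) + (1, (i : ℕ) + 1) = (d, k + 1) := by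
      rw [hs] at h1
      generalize Finsupp.weight (wtv L) (s - Finsupp.single i 1) = u at h1 ⊢
      obtain ⟨u1, u2⟩ := u
      simp only [Prod.mk_add_mk, Prod.mk.injEq] at h1 ⊢
      omega
    rw [h3] at h2
    exact h2

theorem Eder_X (L : ℕ) (i : Fin (L + 1)) :
    Eder L (X i) = ((i : ℕ) : ℝ) • xvar L ((i : ℕ) - 1) := mkDerivation_X _ _ _

theorem Fder_X (L : ℕ) (i : Fin (L + 1)) :
    Fder L (X i) = ((L : ℝ) - ((i : ℕ) : ℝ)) • xvar L ((i : ℕ) + 1) := mkDerivation_X _ _ _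

theorem xvar_fin (L : ℕ) (i : Fin (L + 1)) : xvar L (i : ℕ) = X i := by
  rw [xvar, dif_pos i.2]

theorem bracket_eq (L : ℕ) : ⁅Eder L, Fder L⁆ =
    mkDerivation ℝ (fun i : Fin (L + 1) => ((L : ℝ) - 2 * ((i : ℕ) : ℝ)) • X i) := by
  apply derivation_ext
  intro i
  rw [Derivation.commutator_apply, mkDerivation_X, Eder_X, Fder_X, Derivation.map_smul,
    Derivation.map_smul]
  have h1 : ((L : ℝ) - ((i : ℕ) : ℝ)) • Eder L (xvar L ((i : ℕ) + 1)) =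
      (((L : ℝ) - ((i : ℕ) : ℝ)) * ((i : ℕ) + 1)) • X i := by
    unfold xvar
    split_ifs with h
    · rw [Eder_X, mul_smul]
      simp [xvar_fin]
    · have : (i : ℕ) = L := by have := i.2; omega
      simp [this]
  have h2 : ((i : ℕ) : ℝ) • Fder L (xvar L ((i : ℕ) - 1)) =
      (((i : ℕ) : ℝ) * ((L : ℝ) - (i : ℕ) + 1)) • X i := by
    rcases Nat.eq_zero_or_pos (i : ℕ) with h0 | h0
    · rw [h0]; simp
    · have hlt : (i : ℕ) - 1 < L + 1 := by have := i.2; omega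
      rw [xvar, dif_pos hlt, Fder_X, mul_smul]
      have h3 : ((i : ℕ) - 1 + 1) = (i : ℕ) := by omega
      simp only [h3]
      rw [Nat.cast_sub h0]
      congr 2
      · push_cast; ring
      · simp [xvar_fin]
  rw [h1, h2, ← sub_smul]
  congr 1
  ring

theorem weight_eq (L : ℕ) (s : Fin (L + 1) →₀ ℕ) :
    Finsupp.weight (wtv L) s = (∑ i, s i, ∑ i : Fin (L + 1), s i * (i : ℕ)) := by
  rw [Finsupp.weight_apply, Finsupp.sum_fintype _ _ (by simp)]
  ext <;> simp [wtv, Prod.fst_sum, Prod.snd_sum]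

theorem bracket_apply (L d k : ℕ) (p) (hp : p ∈ Apiece L d k) :
    Eder L (Fder L p) = Fder L (Eder L p) + (((L * d : ℕ) : ℝ) - 2 * k) • p := by
  rw [← sub_eq_iff_eq_add', ← Derivation.commutator_apply, bracket_eq]
  refine IsWeightedHomogeneous.induction_on (motive := fun p _ =>
    mkDerivation ℝ (fun i : Fin (L + 1) => ((L : ℝ) - 2 * ((i : ℕ) : ℝ)) • X i) p =
      (((L * d : ℕ) : ℝ) - 2 * k) • p) ?_ ?_ ?_ hp
  · simp
  · intro p q _ _ h1 h2
    rw [map_add, h1, h2, smul_add]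
  · intro s r hs
    rw [weight_eq] at hs
    simp only [Prod.mk.injEq] at hs
    rw [mkDerivation_monomial, Finsupp.sum_fintype _ _ (by simp)]
    have h1 : ∀ i : Fin (L + 1), (monomial (s - Finsupp.single i 1) ((s i : ℕ) : ℝ)) •
        (((L : ℝ) - 2 * ((i : ℕ) : ℝ)) • (X i : MvPolynomial (Fin (L + 1)) ℝ)) =
        (((s i : ℕ) : ℝ) * ((L : ℝ) - 2 * ((i : ℕ) : ℝ))) • monomial s (1 : ℝ) := by
      intro i
      by_cases hi : s i = 0
      · simp [hi]
      · have h : (s - Finsupp.single i 1) + Finsupp.single i 1 = s := by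
          rw [tsub_add_cancel_of_le]
          simpa [Finsupp.single_le_iff] using Nat.one_le_iff_ne_zero.mpr hi
        rw [smul_eq_mul, X, mul_smul_comm, monomial_mul, h, smul_monomial, smul_monomial]
        congr 1
        simp [mul_comm]
    rw [Finset.sum_congr rfl (fun i _ => h1 i), ← Finset.sum_smul]
    have h2 : ∑ i : Fin (L + 1), (((s i : ℕ) : ℝ) * ((L : ℝ) - 2 * ((i : ℕ) : ℝ))) =
        ((L * d : ℕ) : ℝ) - 2 * k := by
      rw [← hs.1, ← hs.2]
      push_cast
      rw [Finset.mul_sum, Finset.mul_sum, ← Finset.sum_sub_distrib]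
      apply Finset.sum_congr rfl
      intro i _
      ring
    rw [h2, smul_monomial, smul_monomial, smul_monomial]
    congr 1
    simp [mul_comm]

theorem Apiece_big (L d k : ℕ) (hk : L * d < k) (p) (hp : p ∈ Apiece L d k) : p = 0 := by
  apply MvPolynomial.ext
  intro s
  rw [coeff_zero]
  by_contra hne
  have h := hp hne
  rw [weight_eq] at h
  simp only [Prod.mk.injEq] at h
  have h2 : ∑ i : Fin (L + 1), s i * (i : ℕ) ≤ ∑ i : Fin (L + 1), s i * L :=
    Finset.sum_le_sum (fun i _ => Nat.mul_le_mul_left _ (by have := i.2; omega))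
  rw [← Finset.sum_mul, h.1, h.2] at h2
  rw [mul_comm] at h2
  omega

theorem poly_sl2 (L d : ℕ) : Sl2Data (Apiece L d) (Eder L).toLinearMap
    (Fder L).toLinearMap (L * d) where
  hE := Eder_mem L d
  hE0 := Eder_zero L d
  hF := Fder_mem L d
  hH := fun k v hv => by simpa using bracket_apply L d k v hv
  hN := Apiece_big L d

end PolyModel
/-! ### Dimensions -/
section Dims
open MvPolynomial Module

instance wt_finite (L d k : ℕ) :
    Finite {s : Fin (L + 1) →₀ ℕ | Finsupp.weight (wtv L) s = (d, k)} := by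
  apply Set.Finite.to_subtype
  refine Set.Finite.subset
    (Finsupp.finite_of_nat_weight_eq (fun _ : Fin (L + 1) => 1) (by simp) d) ?_
  intro s hs
  simp only [Set.mem_ofPred_eq] at hs ⊢
  rw [weight_eq] at hs
  simp only [Prod.mk.injEq] at hs
  rw [← hs.1, Finsupp.weight_apply, Finsupp.sum_fintype _ _ (by simp)]
  simp

/-- number of monomials of degree `d` and weight `k` -/
noncomputable def monoCount (L d k : ℕ) : ℕ :=
  Nat.card {s : Fin (L + 1) →₀ ℕ | Finsupp.weight (wtv L) s = (d, k)}

theorem Apiece_eq (L d k : ℕ) : Apiece L d k =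
    restrictSupport ℝ {s : Fin (L + 1) →₀ ℕ | Finsupp.weight (wtv L) s = (d, k)} := by
  rw [Apiece, weightedHomogeneousSubmodule_eq_finsupp_supported]
  rfl

instance Apiece_finite (L d k : ℕ) : Module.Finite ℝ (Apiece L d k) := by
  rw [Apiece_eq]
  exact Module.Finite.of_basis (basisRestrictSupport ℝ _)

theorem Apiece_finrank (L d k : ℕ) : finrank ℝ (Apiece L d k) = monoCount L d k := by
  rw [Apiece_eq]
  exact finrank_eq_nat_card_basis (basisRestrictSupport ℝ _)

/-- highest weight vectors -/
noncomputable def hwv (L d k : ℕ) : Submodule ℝ (MvPolynomial (Fin (L + 1)) ℝ) :=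
  Apiece L d k ⊓ LinearMap.ker (Eder L).toLinearMap

noncomputable def mult (L d k : ℕ) : ℕ := finrank ℝ (hwv L d k)

theorem mem_hwv {L d k : ℕ} {p} : p ∈ hwv L d k ↔ p ∈ Apiece L d k ∧ Eder L p = 0 := by
  simp [hwv]

instance hwv_finite (L d k : ℕ) : Module.Finite ℝ (hwv L d k) :=
  Submodule.finiteDimensional_of_le (inf_le_left : hwv L d k ≤ Apiece L d k)

theorem mult_zero (L d : ℕ) : mult L d 0 = monoCount L d 0 := by
  rw [mult, ← Apiece_finrank]
  have : hwv L d 0 = Apiece L d 0 := by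
    apply le_antisymm
    · exact inf_le_left
    · intro p hp
      exact mem_hwv.mpr ⟨hp, Eder_zero L d p hp⟩
  rw [this]

theorem rank_null (L d k : ℕ) :
    finrank ℝ (LinearMap.range ((Eder L).toLinearMap.domRestrict (Apiece L d k))) + mult L d k =
      monoCount L d k := by
  rw [← Apiece_finrank, ← LinearMap.finrank_range_add_finrank_ker
    ((Eder L).toLinearMap.domRestrict (Apiece L d k)), mult]
  congr 1
  rw [← Submodule.finrank_map_subtype_eq (Apiece L d k)
    (LinearMap.ker ((Eder L).toLinearMap.domRestrict (Apiece L d k)))]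
  have : Submodule.map (Apiece L d k).subtype
      (LinearMap.ker ((Eder L).toLinearMap.domRestrict (Apiece L d k))) = hwv L d k := ?_
  · rw [this]
  ext p
  simp only [mem_hwv, Submodule.mem_map, LinearMap.mem_ker]
  constructor
  · rintro ⟨⟨q, hq⟩, h0, rfl⟩
    exact ⟨hq, h0⟩
  · rintro ⟨hp, h0⟩
    exact ⟨⟨p, hp⟩, h0, rfl⟩

theorem range_le (L d k : ℕ) :
    LinearMap.range ((Eder L).toLinearMap.domRestrict (Apiece L d (k + 1))) ≤ Apiece L d k := by
  rintro _ ⟨⟨q, hq⟩, rfl⟩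
  exact Eder_mem L d k q hq

theorem monoCount_le (L d k : ℕ) :
    monoCount L d (k + 1) ≤ mult L d (k + 1) + monoCount L d k := by
  rw [← rank_null L d (k + 1), ← Apiece_finrank L d k, add_comm]
  exact Nat.add_le_add_left (Submodule.finrank_mono (range_le L d k)) _

theorem mult_succ (L d k : ℕ) (hk : 2 * (k + 1) ≤ L * d) :
    mult L d (k + 1) + monoCount L d k = monoCount L d (k + 1) := by
  rw [← rank_null L d (k + 1), ← Apiece_finrank L d k, add_comm]
  suffices h : LinearMap.range ((Eder L).toLinearMap.domRestrict (Apiece L d (k + 1))) =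
      Apiece L d k by rw [h]
  apply le_antisymm (range_le L d k)
  intro p hp
  obtain ⟨u, hu, h⟩ := (poly_sl2 L d).surj k (by omega) p hp
  exact ⟨⟨u, hu⟩, h⟩

theorem mult_big (L d k : ℕ) (hk : L * d < 2 * k) : mult L d k = 0 := by
  have : hwv L d k = ⊥ := by
    rw [eq_bot_iff]
    intro p hp
    rw [mem_hwv] at hp
    exact (Submodule.mem_bot ℝ).mpr ((poly_sl2 L d).inj k hk p hp.1 hp.2)
  rw [mult, this, finrank_bot]

/-- every count is at most the total multiplicity -/
theorem monoCount_le_sum (L d k : ℕ) :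
    monoCount L d k ≤ ∑ j ∈ Finset.range (L * d / 2 + 1), mult L d j := by
  have h1 : ∀ k, monoCount L d k ≤ ∑ j ∈ Finset.range (k + 1), mult L d j := by
    intro k
    induction k with
    | zero => simp [mult_zero]
    | succ k ih =>
      rw [Finset.sum_range_succ]
      have := monoCount_le L d k
      omega
  refine (h1 k).trans ?_
  rcases Nat.le_total (k + 1) (L * d / 2 + 1) with h | h
  · exact Finset.sum_le_sum_of_subset (Finset.range_mono h)
  · rw [← Finset.sum_subset (Finset.range_mono h)]
    intro j _ hj
    simp only [Finset.mem_range, not_lt] at hj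
    exact mult_big L d j (by omega)

/-- the semigroup property -/
theorem mult_mul (L d₁ d₂ k₁ k₂ : ℕ) (h : 0 < mult L d₂ k₂) :
    mult L d₁ k₁ ≤ mult L (d₁ + d₂) (k₁ + k₂) := by
  have hne : hwv L d₂ k₂ ≠ ⊥ := by
    intro h0
    rw [mult, h0, finrank_bot] at h
    exact lt_irrefl _ h
  obtain ⟨g, hg, hg0⟩ := Submodule.exists_mem_ne_zero_of_ne_bot hne
  rw [mem_hwv] at hg
  have hmem : ∀ f ∈ hwv L d₁ k₁, (LinearMap.mulRight ℝ g) f ∈ hwv L (d₁ + d₂) (k₁ + k₂) := by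
    intro f hf
    rw [mem_hwv] at hf
    rw [mem_hwv, LinearMap.mulRight_apply]
    refine ⟨IsWeightedHomogeneous.mul hf.1 hg.1, ?_⟩
    rw [Derivation.leibniz, hf.2, hg.2]
    simp
  refine LinearMap.finrank_le_finrank_of_injective (f := (LinearMap.mulRight ℝ g).restrict hmem) ?_
  rintro ⟨a, ha⟩ ⟨b, hb⟩ hab
  have : a * g = b * g := congrArg Subtype.val hab
  exact Subtype.ext (mul_right_cancel₀ hg0 this)

end Dims
/-! ### Invariants from pairing isotypic components -/
section Pairing
open MvPolynomial Module

/-- the Weyl element -/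
noncomputable def tau (L : ℕ) :
    MvPolynomial (Fin (L + 1)) ℝ →ₐ[ℝ] MvPolynomial (Fin (L + 1)) ℝ :=
  aeval (fun i => ((-1 : ℝ) ^ (i : ℕ)) • X i.rev)

theorem tau_X (L : ℕ) (i : Fin (L + 1)) : tau L (X i) = ((-1 : ℝ) ^ (i : ℕ)) • X i.rev := by
  simp [tau]

theorem tau_mem (L d k : ℕ) (p) (hp : p ∈ Apiece L d k) : tau L p ∈ Apiece L d (L * d - k) := by
  refine IsWeightedHomogeneous.induction_on
    (motive := fun p _ => tau L p ∈ Apiece L d (L * d - k)) ?_ ?_ ?_ hp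
  · simp
  · intro p q _ _ h1 h2
    rw [map_add]; exact Submodule.add_mem _ h1 h2
  · intro s r hs
    rw [tau, aeval_monomial, Finsupp.prod_fintype _ _ (by simp), ← Algebra.smul_def]
    apply Submodule.smul_mem
    have h1 : ∀ i : Fin (L + 1), IsWeightedHomogeneous (wtv L)
        ((((-1 : ℝ) ^ (i : ℕ)) • (X i.rev : MvPolynomial (Fin (L + 1)) ℝ)) ^ (s i))
        (s i • ((1 : ℕ), L - (i : ℕ))) := by
      intro i
      apply IsWeightedHomogeneous.pow
      have h2 := isWeightedHomogeneous_X ℝ (wtv L) i.rev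
      have h3 : wtv L i.rev = (1, L - (i : ℕ)) := by
        simp [wtv, Fin.val_rev]
      rw [h3] at h2
      exact Submodule.smul_mem (weightedHomogeneousSubmodule ℝ (wtv L) (1, L - (i : ℕ))) _ h2
    have h4 := IsWeightedHomogeneous.prod Finset.univ _ _ (fun i _ => h1 i)
    have h5 : ∑ i : Fin (L + 1), s i • ((1 : ℕ), L - (i : ℕ)) = (d, L * d - k) := by
      rw [weight_eq] at hs
      simp only [Prod.mk.injEq] at hs
      have h6 : ∑ i : Fin (L + 1), s i * (L - (i : ℕ)) + k = L * d := by
        rw [← hs.1, ← hs.2, ← Finset.sum_add_distrib, Finset.mul_sum]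
        apply Finset.sum_congr rfl
        intro i _
        rw [← mul_add, mul_comm, Nat.sub_add_cancel (by have := i.2; omega)]
      ext
      · simp [Prod.fst_sum, hs.1]
      · simp only [Prod.snd_sum, Prod.smul_snd, smul_eq_mul]
        omega
    rw [h5] at h4
    exact h4

theorem tau_xvar (L j : ℕ) (hj : j ≤ L) : tau L (xvar L j) = ((-1 : ℝ) ^ j) • xvar L (L - j) := by
  have h1 : j < L + 1 := by omega
  rw [xvar, dif_pos h1, tau_X, xvar, dif_pos (by omega)]
  congr 2
  ext
  simp [Fin.val_rev]

theorem tau_F (L : ℕ) (hL : Even L) (p) : Eder L (tau L p) = - tau L (Fder L p) := by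
  induction p using MvPolynomial.induction_on with
  | C r => 
    have h1 : (C r : MvPolynomial (Fin (L + 1)) ℝ) = algebraMap ℝ _ r := rfl
    rw [h1, AlgHom.commutes, Derivation.map_algebraMap, Derivation.map_algebraMap, map_zero, neg_zero]
  | add p q hp hq => rw [map_add, map_add, hp, hq, map_add, map_add]; ring
  | mul_X p i hp =>
    have hX : Eder L (tau L (X i)) = - tau L (Fder L (X i)) := by
      rw [tau_X, Derivation.map_smul, Eder_X, Fder_X, map_smul]
      have hi := i.2
      rcases Nat.eq_or_lt_of_le (Nat.lt_succ_iff.mp hi) with h | h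
      · have h0 : ((i.rev : Fin (L + 1)) : ℕ) = 0 := by rw [Fin.val_rev]; omega
        rw [h0, h]
        simp
      · rw [tau_xvar L _ (by omega)]
        have h0 : ((i.rev : Fin (L + 1)) : ℕ) = L - (i : ℕ) := by rw [Fin.val_rev]; omega
        rw [h0, Nat.cast_sub (by omega), Nat.sub_sub, smul_smul, smul_smul, ← neg_smul]
        congr 1
        rw [pow_succ]; ring
    rw [map_mul, Derivation.leibniz, Derivation.leibniz, hp, hX, map_add, smul_eq_mul, smul_eq_mul,
      smul_eq_mul, smul_eq_mul, map_mul, map_mul]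
    ring

/-- coefficients of the pairing -/
noncomputable def alph (w i : ℕ) : ℝ := ((w - i).factorial : ℝ) / (i.factorial : ℝ)

theorem alph_pos (w i : ℕ) : 0 < alph w i := by
  unfold alph; positivity

theorem alph_succ (w i : ℕ) (h : i < w) :
    alph w (i + 1) * (((i : ℝ) + 1) * ((w : ℝ) - i)) = alph w i := by
  unfold alph
  obtain ⟨j, rfl⟩ : ∃ j, w = i + 1 + j := ⟨w - (i + 1), by omega⟩
  have h1 : i + 1 + j - i = j + 1 := by omega
  have h2 : i + 1 + j - (i + 1) = j := by omega
  rw [h1, h2, Nat.factorial_succ, Nat.factorial_succ]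
  push_cast
  have : (i.factorial : ℝ) ≠ 0 := by positivity
  field_simp
  ring

/-- the invariant pairing -/
noncomputable def pairQ (L w : ℕ) (g : MvPolynomial (Fin (L + 1)) ℝ) :
    MvPolynomial (Fin (L + 1)) ℝ →ₗ[ℝ] MvPolynomial (Fin (L + 1)) ℝ :=
  ∑ i ∈ Finset.range (w + 1), alph w i •
    ((LinearMap.mulRight ℝ (tau L (((Fder L).toLinearMap ^ i) g))) ∘ₗ ((Fder L).toLinearMap ^ i))

theorem pairQ_apply (L w : ℕ) (f g) : pairQ L w g f = ∑ i ∈ Finset.range (w + 1),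
    alph w i • ((((Fder L).toLinearMap ^ i) f) * tau L (((Fder L).toLinearMap ^ i) g)) := by
  simp [pairQ]

theorem pairQ_mem (L a k w : ℕ) (hL : Even L) (hw : 2 * k + w = L * a) (f g)
    (hf : f ∈ hwv L a k) (hg : g ∈ hwv L a k) : pairQ L w g f ∈ hwv L (a + a) (L * a) := by
  rw [mem_hwv] at hf hg ⊢
  have S := poly_sl2 L a
  rw [pairQ_apply]
  constructor
  · apply Submodule.sum_mem
    intro i hi
    rw [Finset.mem_range] at hi
    apply Submodule.smul_mem
    have h1 := S.Fpow i k f hf.1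
    have h2 := tau_mem L a _ _ (S.Fpow i k g hg.1)
    have h3 := IsWeightedHomogeneous.mul h1 h2
    have h4 : ((a, k + i) : ℕ × ℕ) + (a, L * a - (k + i)) = (a + a, L * a) := by
      ext
      · rfl
      · simp only [Prod.mk_add_mk]; omega
    rw [h4] at h3
    exact h3
  · rw [map_sum]
    set Fl := (Fder L).toLinearMap with hFl
    have h1 : ∀ i, Eder L (alph w i • ((Fl ^ i) f * tau L ((Fl ^ i) g))) =
        alph w i • (Eder L ((Fl ^ i) f) * tau L ((Fl ^ i) g)) -
        alph w i • ((Fl ^ i) f * tau L ((Fl ^ (i + 1)) g)) := by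
      intro i
      rw [Derivation.map_smul, Derivation.leibniz, tau_F L hL, ← smul_sub]
      congr 1
      rw [pow_succ' Fl i, Module.End.mul_apply, smul_eq_mul, smul_eq_mul]
      simp only [hFl, Derivation.coeFn_coe]
      ring
    rw [Finset.sum_congr rfl (fun i _ => h1 i), Finset.sum_sub_distrib, Finset.sum_range_succ',
      Finset.sum_range_succ (fun i => alph w i • ((Fl ^ i) f * tau L ((Fl ^ (i + 1)) g)))]
    rw [S.Fvanish k w hw g hg.1 hg.2]
    have h2 : ∀ i ∈ Finset.range w, alph w (i + 1) • (Eder L ((Fl ^ (i + 1)) f) *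
        tau L ((Fl ^ (i + 1)) g)) = alph w i • ((Fl ^ i) f * tau L ((Fl ^ (i + 1)) g)) := by
      intro i hi
      rw [Finset.mem_range] at hi
      have h3 := S.EFpow i k f hf.1 hf.2
      have h4 : ((L * a : ℕ) : ℝ) - 2 * k - i = w - i := by
        rw [← hw]; push_cast; ring
      rw [h4] at h3
      have h5 : Eder L ((Fl ^ (i + 1)) f) = (((i : ℝ) + 1) * ((w : ℝ) - i)) • (Fl ^ i) f := h3
      rw [h5, smul_mul_assoc, smul_smul, alph_succ w i hi]
    rw [Finset.sum_congr rfl h2]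
    simp [hf.2]

/-- points of the real form -/
noncomputable def zpt {L : ℕ} (y : Fin (L + 1) → ℂ) (i : Fin (L + 1)) : ℂ :=
  (1 + Complex.I) * y i + (1 - Complex.I) * ((-1) ^ (i : ℕ) * y i.rev)

theorem sgn_rev {L : ℕ} (hL : Even L) (i : Fin (L + 1)) :
    (-1 : ℂ) ^ ((i.rev : Fin (L + 1)) : ℕ) = (-1) ^ (i : ℕ) := by
  have h : ((i.rev : Fin (L + 1)) : ℕ) + (i : ℕ) = L := by
    rw [Fin.val_rev]; have := i.2; omega
  have h2 : Even (((i.rev : Fin (L + 1)) : ℕ) + (i : ℕ)) := by rw [h]; exact hL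
  rw [Nat.even_add] at h2
  by_cases h3 : Even (i : ℕ)
  · rw [h3.neg_one_pow, (h2.mpr h3).neg_one_pow]
  · have h4 : ¬ Even ((i.rev : Fin (L + 1)) : ℕ) := fun h => h3 (h2.mp h)
    rw [(Nat.not_even_iff_odd.mp h3).neg_one_pow, (Nat.not_even_iff_odd.mp h4).neg_one_pow]

theorem sgn_sq (n : ℕ) : ((-1 : ℂ) ^ n) * (-1) ^ n = 1 := by
  rw [← mul_pow]; simp

theorem aeval_tau {L : ℕ} (hL : Even L) (y : Fin (L + 1) → ℝ) (p) :
    aeval (zpt (fun i => (y i : ℂ))) (tau L p) =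
      (starRingEnd ℂ) (aeval (zpt (fun i => (y i : ℂ))) p) := by
  have h : (aeval (zpt (fun i => (y i : ℂ)))).comp (tau L) =
      (Complex.conjAe.toAlgHom).comp (aeval (zpt (fun i => (y i : ℂ)))) := by
    apply MvPolynomial.algHom_ext
    intro i
    simp only [AlgHom.comp_apply, tau_X, map_smul, aeval_X]
    have : (Complex.conjAe.toAlgHom) (zpt (fun i => (y i : ℂ)) i) =
      (starRingEnd ℂ) (zpt (fun i => (y i : ℂ)) i) := rfl
    rw [this, zpt, zpt, sgn_rev hL, Fin.rev_rev]
    simp only [map_add, map_mul, map_sub, map_one, Complex.conj_I, Complex.conj_ofReal, map_pow,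
      map_neg, Complex.real_smul]
    push_cast
    linear_combination ((1 - Complex.I) * (y i : ℂ)) * sgn_sq (i : ℕ)
  exact DFunLike.congr_fun h p

theorem zpt_surj {L : ℕ} (hL : Even L) (t : Fin (L + 1) → ℂ) : ∃ y, zpt y = t := by
  refine ⟨fun i => ((1 + Complex.I) * t i - (1 - Complex.I) * ((-1) ^ (i : ℕ) * t i.rev)) /
    (4 * Complex.I), ?_⟩
  funext i
  rw [zpt, sgn_rev hL, Fin.rev_rev]
  have hI : (4 * Complex.I) ≠ 0 := by simp
  field_simp
  have h := sgn_sq (i : ℕ)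
  have h2 := Complex.I_sq
  linear_combination (-(1 - Complex.I) ^ 2 * t i) * h 

theorem eq_zero_of_zpt {L : ℕ} (hL : Even L) (p : MvPolynomial (Fin (L + 1)) ℝ)
    (h : ∀ y : Fin (L + 1) → ℝ, aeval (zpt (fun i => (y i : ℂ))) p = 0) : p = 0 := by
  set P : MvPolynomial (Fin (L + 1)) ℂ :=
    aeval (fun i : Fin (L + 1) => (C (1 + Complex.I) * X i +
      C (1 - Complex.I) * (C ((-1) ^ (i : ℕ)) * X i.rev) : MvPolynomial (Fin (L + 1)) ℂ)) p with hP
  have hev : ∀ y : Fin (L + 1) → ℂ, eval y P = aeval (zpt y) p := by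
    intro y
    have h1 : ((aeval y : MvPolynomial (Fin (L + 1)) ℂ →ₐ[ℂ] ℂ).restrictScalars ℝ).comp
      (aeval (fun i : Fin (L + 1) => (C (1 + Complex.I) * X i +
      C (1 - Complex.I) * (C ((-1) ^ (i : ℕ)) * X i.rev) : MvPolynomial (Fin (L + 1)) ℂ))) =
      (aeval (zpt y) : MvPolynomial (Fin (L + 1)) ℝ →ₐ[ℝ] ℂ) := by
      apply MvPolynomial.algHom_ext
      intro i
      simp [zpt]
    have h2 := DFunLike.congr_fun h1 p
    rw [← h2]
    simp [hP]
  have hP0 : P = 0 := by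
    apply MvPolynomial.funext_set (fun _ => Set.range (fun x : ℝ => (x : ℂ)))
    · intro _
      exact Set.infinite_range_of_injective Complex.ofReal_injective
    · intro x hx
      choose y hy using fun i => hx i (Set.mem_univ i)
      have : x = fun i => (y i : ℂ) := by funext i; exact (hy i).symm
      rw [this, hev, h, map_zero]
  apply MvPolynomial.funext
  intro t
  obtain ⟨y, hy⟩ := zpt_surj hL (fun i => (t i : ℂ))
  have h3 := hev y
  rw [hP0, map_zero, hy] at h3
  have h4 : aeval (fun i => ((t i : ℝ) : ℂ)) p = ((eval t p : ℝ) : ℂ) := by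
    have := MvPolynomial.aeval_algebraMap_apply (A := ℝ) ℂ t p
    simpa [Function.comp_def] using this
  rw [h4] at h3
  rw [map_zero]
  exact_mod_cast h3.symm

theorem pairQ_def {L : ℕ} (hL : Even L) (w : ℕ) (f) (h : pairQ L w f f = 0) : f = 0 := by
  apply eq_zero_of_zpt hL
  intro y
  set φ : MvPolynomial (Fin (L + 1)) ℝ →ₐ[ℝ] ℂ := aeval (zpt (fun i => (y i : ℂ))) with hφ
  have h1 := congrArg φ h
  rw [pairQ_apply, map_sum, map_zero] at h1
  have h2 : ∀ i ∈ Finset.range (w + 1), φ (alph w i • ((((Fder L).toLinearMap ^ i) f) *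
      tau L (((Fder L).toLinearMap ^ i) f))) =
      ((alph w i * Complex.normSq (φ (((Fder L).toLinearMap ^ i) f)) : ℝ) : ℂ) := by
    intro i _
    rw [map_smul, map_mul, hφ, aeval_tau hL, Complex.mul_conj, Complex.real_smul]
    push_cast
    rfl
  rw [Finset.sum_congr rfl h2, ← Complex.ofReal_sum] at h1
  have h3 : ∑ i ∈ Finset.range (w + 1),
    alph w i * Complex.normSq (φ (((Fder L).toLinearMap ^ i) f)) = 0 := by exact_mod_cast h1
  rw [Finset.sum_eq_zero_iff_of_nonneg (fun i _ =>
    mul_nonneg (alph_pos w i).le (Complex.normSq_nonneg _))] at h3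
  have h4 := h3 0 (by simp)
  rcases mul_eq_zero.mp h4 with h5 | h5
  · exact absurd h5 (alph_pos w 0).ne'
  · simpa using h5

/-- multiplicities give invariants -/
theorem mult_pair (L a k w : ℕ) (hL : Even L) (hw : 2 * k + w = L * a) :
    mult L a k ≤ (w + 1) * mult L (a + a) (L * a) := by
  classical
  set Fl := (Fder L).toLinearMap with hFl
  let hat : hwv L a k → (Fin (w + 1) → MvPolynomial (Fin (L + 1)) ℝ) :=
    fun g i => (Fl ^ (i : ℕ)) g.1
  obtain ⟨s, hs, hmax⟩ := exists_maximal_linearIndepOn (MvPolynomial (Fin (L + 1)) ℝ) hat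
  have hsfin : Finite s := LinearIndependent.finite hs
  have : Fintype s := Fintype.ofFinite s
  have hcard : Fintype.card s ≤ w + 1 := by
    have := LinearIndependent.fintype_card_le_finrank hs
    simpa using this
  let Φ : hwv L a k →ₗ[ℝ] (s → hwv L (a + a) (L * a)) :=
    LinearMap.pi (fun g => (pairQ L w g.1.1).restrict
      (fun f hf => pairQ_mem L a k w hL hw f g.1.1 hf g.1.2))
  have hinj : Function.Injective Φ := by
    rw [injective_iff_map_eq_zero]
    intro f hf
    have hfg : ∀ g ∈ s, pairQ L w g.1 f.1 = 0 := by
      intro g hg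
      exact congrArg Subtype.val (congrFun hf ⟨g, hg⟩)
    have hspan : ∃ c : MvPolynomial (Fin (L + 1)) ℝ, c ≠ 0 ∧ c • hat f ∈
        Submodule.span (MvPolynomial (Fin (L + 1)) ℝ) (hat '' s) := by
      by_cases hfs : f ∈ s
      · exact ⟨1, one_ne_zero, by
          rw [one_smul]; exact Submodule.subset_span (Set.mem_image_of_mem _ hfs)⟩
      · exact hmax f hfs
    obtain ⟨c, hc, hmem⟩ := hspan
    -- the semilinear functional
    have key : ∀ v ∈ Submodule.span (MvPolynomial (Fin (L + 1)) ℝ) (hat '' s),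
        ∑ i : Fin (w + 1), alph w i • (((Fl ^ (i : ℕ)) f.1) * tau L (v i)) = 0 := by
      intro v hv
      induction hv using Submodule.span_induction with
      | mem v hv =>
        obtain ⟨g, hg, rfl⟩ := hv
        have := hfg g hg
        rw [pairQ_apply, Finset.sum_range] at this
        exact this
      | zero => simp
      | add u v _ _ hu hv =>
        simp only [Pi.add_apply, map_add, mul_add, smul_add, Finset.sum_add_distrib, hu, hv, add_zero]
      | smul r v _ hv =>
        have : ∀ i : Fin (w + 1), alph w i • (((Fl ^ (i : ℕ)) f.1) * tau L ((r • v) i)) =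
            tau L r * (alph w i • (((Fl ^ (i : ℕ)) f.1) * tau L (v i))) := by
          intro i
          rw [Pi.smul_apply, smul_eq_mul, map_mul, mul_smul_comm]
          congr 1
          ring
        rw [Finset.sum_congr rfl (fun i _ => this i), ← Finset.mul_sum, hv, mul_zero]
    have h1 := key _ hmem
    have h2 : tau L c * pairQ L w f.1 f.1 = 0 := by
      rw [pairQ_apply, Finset.sum_range, Finset.mul_sum, ← h1]
      apply Finset.sum_congr rfl
      intro i _
      rw [Pi.smul_apply, smul_eq_mul, map_mul, mul_smul_comm]
      congr 1
      simp only [hat, ← hFl]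
      ring
    have hinv : tau L (tau L c) = c := by
      have h3 : (tau L).comp (tau L) = AlgHom.id ℝ _ := by
        apply MvPolynomial.algHom_ext
        intro i
        rw [AlgHom.comp_apply, tau_X, map_smul, tau_X, Fin.rev_rev, smul_smul]
        have h4 : (i : ℕ) + ((i.rev : Fin (L + 1)) : ℕ) = L := by
          rw [Fin.val_rev]; have := i.2; omega
        rw [← pow_add, h4, hL.neg_one_pow, one_smul]
        rfl
      exact DFunLike.congr_fun h3 c
    have hc' : tau L c ≠ 0 := by
      intro h0
      rw [h0, map_zero] at hinv
      exact hc hinv.symm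
    have h3 := (mul_eq_zero.mp h2).resolve_left hc'
    exact Subtype.ext (pairQ_def hL w f.1 h3)
  have hle := LinearMap.finrank_le_finrank_of_injective hinj
  rw [Module.finrank_pi_fintype] at hle
  simp only [Finset.sum_const, Finset.card_univ, smul_eq_mul] at hle
  exact hle.trans (Nat.mul_le_mul_right _ hcard)

end Pairing
/-! ### Combinatorics of Gaussian binomials -/
section Gauss
open Polynomial

/-- Gaussian binomial `binom(d+L, L)_q` -/
noncomputable def gP : ℕ → ℕ → ℕ[X]
  | _, 0 => 1
  | 0, _ + 1 => 1
  | d + 1, L + 1 => gP (d + 1) L + X ^ (L + 1) * gP d (L + 1)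

theorem gP_zero_right (d : ℕ) : gP d 0 = 1 := by cases d <;> simp [gP]
theorem gP_zero_left (L : ℕ) : gP 0 L = 1 := by cases L <;> simp [gP]
theorem gP_succ (d L : ℕ) : gP (d + 1) (L + 1) = gP (d + 1) L + X ^ (L + 1) * gP d (L + 1) := by
  simp [gP]

theorem gP_succ' (N : ℕ) : ∀ d L : ℕ, d + L = N →
    gP (d + 1) (L + 1) = gP d (L + 1) + X ^ (d + 1) * gP (d + 1) L := by
  induction N using Nat.strong_induction_on with
  | _ N ih =>
    intro d L h
    rcases d with _ | d
    · rcases L with _ | L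
      · simp [gP_succ, gP_zero_left, gP_zero_right]
      · have h1 := ih L (by omega) 0 L (by omega)
        have h2 := gP_succ 0 L
        rw [gP_zero_left] at h1 h2
        calc gP (0 + 1) (L + 1 + 1) = gP (0 + 1) (L + 1) + X ^ (L + 1 + 1) * 1 := by
              rw [gP_succ 0 (L + 1), gP_zero_left]
          _ = (1 + X ^ (0 + 1) * gP (0 + 1) L) + X ^ (L + 1 + 1) * 1 := by rw [h1]
          _ = 1 + X ^ (0 + 1) * (gP (0 + 1) L + X ^ (L + 1) * 1) := by ring
          _ = _ := by rw [← h2, gP_zero_left]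
    · rcases L with _ | L
      · have h1 := ih d (by omega) d 0 (by omega)
        have h2 := gP_succ d 0
        rw [gP_zero_right] at h1 h2
        calc gP (d + 1 + 1) (0 + 1) = 1 + X ^ (0 + 1) * gP (d + 1) (0 + 1) := by
              rw [gP_succ (d + 1) 0, gP_zero_right]
          _ = 1 + X ^ (0 + 1) * (gP d (0 + 1) + X ^ (d + 1) * 1) := by rw [h1]
          _ = (1 + X ^ (0 + 1) * gP d (0 + 1)) + X ^ (d + 1 + 1) * 1 := by ring
          _ = _ := by rw [← h2, gP_zero_right]
      · have h1 := ih (d + 1 + L) (by omega) (d + 1) L (by omega)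
        have h2 := ih (d + (L + 1)) (by omega) d (L + 1) (by omega)
        calc gP (d + 1 + 1) (L + 1 + 1)
            = gP (d + 1 + 1) (L + 1) + X ^ (L + 1 + 1) * gP (d + 1) (L + 1 + 1) := gP_succ _ _
          _ = (gP (d + 1) (L + 1) + X ^ (d + 1 + 1) * gP (d + 1 + 1) L)
              + X ^ (L + 1 + 1) * (gP d (L + 1 + 1) + X ^ (d + 1) * gP (d + 1) (L + 1)) := by
              rw [h1, h2]
          _ = (gP (d + 1) (L + 1) + X ^ (L + 1 + 1) * gP d (L + 1 + 1))
              + X ^ (d + 1 + 1) * (gP (d + 1 + 1) L + X ^ (L + 1) * gP (d + 1) (L + 1)) := by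
              ring
          _ = _ := by rw [← gP_succ, ← gP_succ]

theorem gP_symm (N : ℕ) : ∀ d L : ℕ, d + L = N → gP d L = gP L d := by
  induction N using Nat.strong_induction_on with
  | _ N ih =>
    intro d L h
    rcases d with _ | d
    · rw [gP_zero_left, gP_zero_right]
    rcases L with _ | L
    · rw [gP_zero_left, gP_zero_right]
    rw [gP_succ, gP_succ' _ L d rfl, ih _ (by omega) (d + 1) L rfl, ih _ (by omega) d (L + 1) rfl]

theorem gP_eval_one (d L : ℕ) : (gP d L).eval 1 = (d + L).choose d := by
  induction L generalizing d with
  | zero => simp [gP_zero_right]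
  | succ L ihL =>
    induction d with
    | zero => simp [gP_zero_left]
    | succ d ihd =>
      rw [gP_succ]
      simp only [eval_add, eval_mul, eval_pow, eval_X, one_pow, one_mul]
      rw [ihL, ihd, show d + 1 + (L + 1) = (d + L + 1) + 1 by ring, Nat.choose_succ_succ,
        show d + 1 + L = d + L + 1 by ring, show d + (L + 1) = d + L + 1 by ring, add_comm]

theorem gP_natDegree (d L : ℕ) : (gP d L).natDegree ≤ d * L := by
  induction L generalizing d with
  | zero => simp [gP_zero_right]
  | succ L ihL =>
    induction d with
    | zero => simp [gP_zero_left]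
    | succ d ihd =>
      rw [gP_succ]
      refine (natDegree_add_le _ _).trans (max_le ((ihL _).trans (by gcongr; omega)) ?_)
      refine (natDegree_mul_le).trans ?_
      rw [natDegree_X_pow]
      nlinarith

theorem gP_sum (d L : ℕ) :
    ∑ k ∈ Finset.range (d * L + 1), (gP d L).coeff k = (d + L).choose d := by
  rw [← gP_eval_one, eval_eq_sum_range' (Nat.lt_succ_of_le (gP_natDegree d L))]
  simp

theorem gP_coeff_zero (d L : ℕ) : (gP d L).coeff 0 = 1 := by
  induction L generalizing d with
  | zero => simp [gP_zero_right]
  | succ L ihL =>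
    rcases d with _ | d
    · simp [gP_zero_left]
    · rw [gP_succ, coeff_add, ihL, mul_coeff_zero]; simp

/-- multisets fitting in a box -/
def MS (d L k : ℕ) : Set (Multiset ℕ) :=
  {s | Multiset.card s = d ∧ s.sum = k ∧ ∀ i ∈ s, i ≤ L}

theorem MS_image (L d k : ℕ) :
    (fun s : Fin (L + 1) →₀ ℕ => (Finsupp.toMultiset s).map Fin.val) ''
      {s | Finsupp.weight (wtv L) s = (d, k)} = MS d L k := by
  have hsum : ∀ s : Fin (L + 1) →₀ ℕ, ((Finsupp.toMultiset s).map Fin.val).sum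
      = ∑ i, s i * (i : ℕ) := by
    intro s
    rw [Finsupp.toMultiset_map, Finsupp.sum_toMultiset,
      Finsupp.sum_mapDomain_index (by simp) (by intros; ring),
      Finsupp.sum_fintype _ _ (by simp)]
    simp
  have hcard : ∀ s : Fin (L + 1) →₀ ℕ, Multiset.card ((Finsupp.toMultiset s).map Fin.val)
      = ∑ i, s i := by
    intro s
    rw [Multiset.card_map, Finsupp.card_toMultiset, Finsupp.sum_fintype _ _ (by simp)]
    rfl
  ext t
  constructor
  · rintro ⟨s, hs, rfl⟩
    simp only [Set.mem_ofPred_eq] at hs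
    rw [weight_eq] at hs
    simp only [Prod.mk.injEq] at hs
    refine ⟨by rw [hcard]; exact hs.1, by rw [hsum]; exact hs.2, ?_⟩
    intro i hi
    rw [Multiset.mem_map] at hi
    obtain ⟨a, -, rfl⟩ := hi
    omega
  · rintro ⟨h1, h2, h3⟩
    have hback : ((Finsupp.toMultiset (Multiset.toFinsupp (t.map (Fin.ofNat (L + 1))))).map
        Fin.val) = t := by
      rw [Multiset.toFinsupp_toMultiset, Multiset.map_map]
      conv_rhs => rw [← Multiset.map_id t]
      apply Multiset.map_congr rfl
      intro x hx
      have := h3 x hx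
      simp only [Function.comp, Fin.ofNat, id]
      exact Nat.mod_eq_of_lt (by omega)
    refine ⟨Multiset.toFinsupp (t.map (Fin.ofNat (L + 1))), ?_, hback⟩
    simp only [Set.mem_ofPred_eq]
    rw [weight_eq, ← hsum, ← hcard, hback, h1, h2]

theorem monoCount_eq_MS (L d k : ℕ) : monoCount L d k = (MS d L k).ncard := by
  rw [← MS_image, Set.ncard_image_of_injective]
  · rfl
  · intro a b hab
    have h := congrArg Multiset.toFinsupp (Multiset.map_injective Fin.val_injective hab)
    simpa using h

theorem MS_finite (d L k : ℕ) : (MS d L k).Finite := by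
  rw [← MS_image]
  exact (Set.toFinite _).image _

theorem rect_image (k l m : ℕ) :
    (fun π : Nat.Partition k => π.parts + Multiset.replicate (l - Multiset.card π.parts) 0) ''
      {π | Multiset.card π.parts ≤ l ∧ ∀ i ∈ π.parts, i ≤ m} = MS l m k := by
  ext t
  constructor
  · rintro ⟨π, ⟨h1, h2⟩, rfl⟩
    refine ⟨by simp; omega, by simp [π.parts_sum], ?_⟩
    intro i hi
    rw [Multiset.mem_add] at hi
    rcases hi with hi | hi
    · exact h2 i hi
    · rw [Multiset.eq_of_mem_replicate hi]; omega
  · rintro ⟨h1, h2, h3⟩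
    have hsplit := Multiset.filter_add_not (fun x => x ≠ 0) t
    have hrep : Multiset.filter (fun x => ¬ x ≠ 0) t
        = Multiset.replicate (l - Multiset.card (Multiset.filter (fun x => x ≠ 0) t)) 0 := by
      rw [Multiset.eq_replicate]
      constructor
      · have := congrArg Multiset.card hsplit
        rw [Multiset.card_add] at this
        omega
      · intro b hb
        simpa using (Multiset.mem_filter.mp hb).2
    refine ⟨Nat.Partition.ofSums k t h2, ⟨?_, ?_⟩, ?_⟩
    · rw [← h1]; exact Multiset.card_le_card (Multiset.filter_le _ _)
    · intro i hi
      exact h3 i (Multiset.mem_of_mem_filter hi)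
    · change Multiset.filter (fun x => x ≠ 0) t + _ = t
      conv_rhs => rw [← hsplit, hrep]
      rfl

theorem rect_eq_MS (k l m : ℕ) : rectPartitions k l m = (MS l m k).ncard := by
  rw [← rect_image, Set.ncard_image_of_injective]
  · rfl
  · intro a b hab
    have h : ∀ π : Nat.Partition k, Multiset.filter (fun x => x ≠ 0)
        (π.parts + Multiset.replicate (l - Multiset.card π.parts) 0) = π.parts := by
      intro π
      rw [Multiset.filter_add, Multiset.filter_eq_self.mpr (fun i hi => (π.parts_pos hi).ne'),
        Multiset.filter_eq_nil.mpr, add_zero]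
      intro i hi
      simpa using Multiset.eq_of_mem_replicate hi
    apply Nat.Partition.ext
    rw [← h a, ← h b]
    exact congrArg _ hab

theorem MS_eq_gP (L : ℕ) : ∀ d k : ℕ, (MS d L k).ncard = (gP d L).coeff k := by
  induction L with
  | zero =>
    intro d k
    rw [gP_zero_right, coeff_one]
    split_ifs with h
    · subst h
      rw [Set.ncard_eq_one]
      refine ⟨Multiset.replicate d 0, ?_⟩
      ext s
      simp only [MS, Set.mem_ofPred_eq, Set.mem_singleton_iff, Multiset.eq_replicate]
      constructor
      · rintro ⟨h1, h2, h3⟩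
        exact ⟨h1, fun b hb => Nat.le_zero.mp (h3 b hb)⟩
      · rintro ⟨h1, h2⟩
        refine ⟨h1, ?_, fun b hb => (h2 b hb).le⟩
        exact Multiset.sum_eq_zero h2
    · rw [Set.ncard_eq_zero (MS_finite _ _ _)]
      ext s
      simp only [MS, Set.mem_ofPred_eq, Set.mem_empty_iff_false, iff_false]
      rintro ⟨h1, h2, h3⟩
      apply h
      rw [← h2]
      exact Multiset.sum_eq_zero (fun b hb => Nat.le_zero.mp (h3 b hb))
  | succ L ihL =>
    intro d
    induction d with
    | zero =>
      intro k
      rw [gP_zero_left, coeff_one]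
      split_ifs with h
      · subst h
        rw [Set.ncard_eq_one]
        refine ⟨0, ?_⟩
        ext s
        simp only [MS, Set.mem_ofPred_eq, Set.mem_singleton_iff]
        constructor
        · rintro ⟨h1, -⟩
          exact Multiset.card_eq_zero.mp h1
        · rintro rfl
          simp
      · rw [Set.ncard_eq_zero (MS_finite _ _ _)]
        ext s
        simp only [MS, Set.mem_ofPred_eq, Set.mem_empty_iff_false, iff_false]
        rintro ⟨h1, h2, h3⟩
        apply h
        rw [← h2, Multiset.card_eq_zero.mp h1]
        rfl
    | succ d ihd =>
      intro k
      rw [gP_succ, coeff_add, coeff_X_pow_mul', ← ihL]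
      have hun : MS (d + 1) (L + 1) k = MS (d + 1) L k ∪
          (fun s => (L + 1) ::ₘ s) '' {s | L + 1 ≤ k ∧ s ∈ MS d (L + 1) (k - (L + 1))} := by
        ext s
        constructor
        · rintro ⟨h1, h2, h3⟩
          by_cases hm : L + 1 ∈ s
          · right
            obtain ⟨t, rfl⟩ := Multiset.exists_cons_of_mem hm
            rw [Multiset.card_cons] at h1
            rw [Multiset.sum_cons] at h2
            exact ⟨t, ⟨by omega, by omega, by omega,
              fun i hi => h3 i (Multiset.mem_cons_of_mem hi)⟩, rfl⟩
          · left
            refine ⟨h1, h2, fun i hi => ?_⟩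
            have := h3 i hi
            have : i ≠ L + 1 := fun h => hm (h ▸ hi)
            omega
        · rintro (⟨h1, h2, h3⟩ | ⟨t, ⟨h0, h1, h2, h3⟩, rfl⟩)
          · exact ⟨h1, h2, fun i hi => (h3 i hi).trans (by omega)⟩
          · refine ⟨by simp [h1], by simp [h2]; omega, ?_⟩
            intro i hi
            rcases Multiset.mem_cons.mp hi with rfl | hi
            · exact le_rfl
            · exact h3 i hi
      have hfin : (({s | L + 1 ≤ k ∧ s ∈ MS d (L + 1) (k - (L + 1))} : Set (Multiset ℕ))).Finite :=
        (MS_finite d (L + 1) (k - (L + 1))).subset (fun s hs => hs.2)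
      rw [hun, Set.ncard_union_eq _ (MS_finite _ _ _) (hfin.image _)]
      · congr 1
        rw [Set.ncard_image_of_injective _ (fun a b hab => by simpa using hab)]
        split_ifs with h
        · rw [← ihd]
          congr 1
          ext s; simp [h]
        · rw [Set.ncard_eq_zero hfin]
          ext s; simp [h]
      · rw [Set.disjoint_left]
        rintro s ⟨-, -, h3⟩ ⟨t, -, rfl⟩
        have := h3 (L + 1) (Multiset.mem_cons_self _ _)
        omega

theorem monoCount_eq (L d k : ℕ) : monoCount L d k = (gP d L).coeff k := by
  rw [monoCount_eq_MS, MS_eq_gP]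

theorem rect_eq (k l m : ℕ) : rectPartitions k l m = (gP l m).coeff k := by
  rw [rect_eq_MS, MS_eq_gP]

theorem monoCount_symm (L d k : ℕ) : monoCount L d k = monoCount d L k := by
  rw [monoCount_eq, monoCount_eq, gP_symm _ d L rfl]

theorem mult_zero' (L d : ℕ) : mult L d 0 = 1 := by
  rw [mult_zero, monoCount_eq, gP_coeff_zero]

theorem mult_symm (L d k : ℕ) (hk : 2 * k ≤ L * d) : mult L d k = mult d L k := by
  rcases k with _ | k
  · rw [mult_zero', mult_zero']
  · have h1 := mult_succ L d k hk
    have h2 := mult_succ d L k (by rw [mul_comm _ L]; exact hk)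
    rw [monoCount_symm d L, monoCount_symm d L] at h2
    omega

theorem rect_diff (l m k : ℕ) (hk1 : 1 ≤ k) (hk : 2 * k ≤ l * m) :
    mult m l k + rectPartitions (k - 1) l m = rectPartitions k l m := by
  obtain ⟨j, rfl⟩ : ∃ j, k = j + 1 := ⟨k - 1, by omega⟩
  have := mult_succ m l j (by rw [mul_comm m]; exact hk)
  rw [monoCount_eq, monoCount_eq] at this
  rw [rect_eq, rect_eq]
  exact this

end Gauss
/-! ### Strict unimodality -/
section Unimodal
open Polynomial

theorem digit_extract (B : ℕ) : ∀ (k : ℕ) (p : ℕ[X]), (∀ i, p.coeff i < B) →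
    p.eval B / B ^ k % B = p.coeff k := by
  have key : ∀ p : ℕ[X], p.eval B = p.coeff 0 + B * p.divX.eval B := by
    intro p
    conv_lhs => rw [← divX_mul_X_add p]
    simp only [eval_add, eval_mul, eval_X, eval_C]
    ring
  intro k
  induction k with
  | zero =>
    intro p hp
    rw [pow_zero, Nat.div_one, key, Nat.add_mul_mod_self_left, Nat.mod_eq_of_lt (hp 0)]
  | succ k ih =>
    intro p hp
    have hB : 0 < B := (Nat.zero_le _).trans_lt (hp 0)
    rw [pow_succ', ← Nat.div_div_eq_div_mul, key, Nat.add_mul_div_left _ _ hB,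
      Nat.div_eq_of_lt (hp 0), zero_add, ih, coeff_divX]
    intro i
    rw [coeff_divX]
    exact hp _

/-- Value of the Gaussian binomial at `B = 2 ^ 32`. -/
def gV (d : ℕ) : ℕ → ℕ
  | 0 => 1
  | L + 1 => gV d L * ((2 ^ 32) ^ (d + L + 1) - 1) / ((2 ^ 32) ^ (L + 1) - 1)

theorem gP_eval_ratio (B : ℕ) (hB : 2 ≤ B) (d L : ℕ) :
    (gP d (L + 1)).eval B * (B ^ (L + 1) - 1) = (gP d L).eval B * (B ^ (d + L + 1) - 1) := by
  have h1 : 1 ≤ B ^ (L + 1) := Nat.one_le_pow _ _ (by omega)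
  have h2 : 1 ≤ B ^ (d + L + 1) := Nat.one_le_pow _ _ (by omega)
  zify [h1, h2]
  rcases d with _ | d
  · simp [gP_zero_left]
  · have e1 := congrArg (fun p => ((p.eval B : ℕ) : ℤ)) (gP_succ d L)
    have e2 := congrArg (fun p => ((p.eval B : ℕ) : ℤ)) (gP_succ' _ d L rfl)
    simp only [eval_add, eval_mul, eval_pow, eval_X] at e1 e2
    push_cast at e1 e2
    linear_combination (B : ℤ) ^ (L + 1) * e2 - e1

theorem gV_eq (d L : ℕ) : gV d L = (gP d L).eval (2 ^ 32) := by
  induction L with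
  | zero => simp [gV, gP_zero_right]
  | succ L ih =>
    rw [gV, ih]
    have h := gP_eval_ratio (2 ^ 32) (by norm_num) d L
    have hpos : 1 < (2 ^ 32) ^ (L + 1) := Nat.one_lt_pow (by omega) (by norm_num)
    exact Nat.div_eq_of_eq_mul_left (by omega) h.symm

theorem gV_coeff (d L k : ℕ) (h : d + L ≤ 31) :
    gV d L / (2 ^ 32) ^ k % (2 ^ 32) = (gP d L).coeff k := by
  rw [gV_eq]
  apply digit_extract
  intro i
  have hle : (gP d L).coeff i ≤ (d + L).choose d := by
    by_cases hi : i < d * L + 1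
    · rw [← gP_sum]
      exact Finset.single_le_sum (f := fun k => (gP d L).coeff k) (fun _ _ => Nat.zero_le _)
        (Finset.mem_range.mpr hi)
    · rw [coeff_eq_zero_of_natDegree_lt ((gP_natDegree d L).trans_lt (by omega))]
      omega
  have h2 := Nat.choose_le_two_pow (d + L) d
  have h3 : 2 ^ (d + L) ≤ 2 ^ 31 := Nat.pow_le_pow_right (by norm_num) h
  omega

/-- check that the coefficients of a number in base `2 ^ 32` are strictly increasing -/
def incr : ℕ → ℕ → Bool
  | 0, _ => true
  | n + 1, x => (x % 2 ^ 32).blt (x / 2 ^ 32 % 2 ^ 32) && incr n (x / 2 ^ 32)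

theorem incr_spec : ∀ n x, incr n x = true → ∀ j < n,
    x / (2 ^ 32) ^ j % 2 ^ 32 < x / (2 ^ 32) ^ (j + 1) % 2 ^ 32 := by
  intro n
  induction n with
  | zero => intro x _ j hj; omega
  | succ n ih =>
    intro x hx j hj
    rw [incr, Bool.and_eq_true, Nat.blt_eq] at hx
    rcases j with _ | j
    · simpa using hx.1
    · have := ih _ hx.2 j (by omega)
      rw [Nat.div_div_eq_div_mul, Nat.div_div_eq_div_mul, ← pow_succ', ← pow_succ'] at this
      exact this

theorem base_check : ∀ i < 8, ∀ j < 8,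
    incr ((i + 8) * (j + 8) / 2 - 1) (gV (i + 8) (j + 8) / 2 ^ 32) = true := by
  decide +kernel

theorem mult_pos_base (L d k : ℕ) (hL : 8 ≤ L) (hL' : L < 16) (hd : 8 ≤ d) (hd' : d < 16)
    (hk : 2 ≤ k) (hk2 : 2 * k ≤ L * d) : 0 < mult L d k := by
  obtain ⟨j, rfl⟩ : ∃ j, k = j + 2 := ⟨k - 2, by omega⟩
  have h := mult_succ L d (j + 1) hk2
  rw [monoCount_eq, monoCount_eq] at h
  have hb := base_check (d - 8) (by omega) (L - 8) (by omega)
  rw [Nat.sub_add_cancel hd, Nat.sub_add_cancel hL] at hb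
  have hlt := incr_spec _ _ hb j (by rw [mul_comm d]; omega)
  rw [Nat.div_div_eq_div_mul, Nat.div_div_eq_div_mul, ← pow_succ', ← pow_succ',
    gV_coeff _ _ _ (by omega), gV_coeff _ _ _ (by omega)] at hlt
  change 0 < mult L d (j + 1 + 1)
  omega

theorem mult_pos_step (L d k : ℕ) (hL : 8 ≤ L) (hd : 16 ≤ d) (hk : 2 ≤ k) (hk2 : 2 * k ≤ L * d)
    (h8 : ∀ j, 2 ≤ j → 2 * j ≤ L * 8 → 0 < mult L 8 j)
    (hrec : ∀ j, 2 ≤ j → 2 * j ≤ L * (d - 8) → 0 < mult L (d - 8) j) : 0 < mult L d k := by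
  have comb : ∀ k1 k2, k1 + k2 = k → 0 < mult L (d - 8) k1 → 0 < mult L 8 k2 →
      0 < mult L d k := by
    intro k1 k2 hk12 h1 h2
    have := mult_mul L (d - 8) 8 k1 k2 h2
    rw [hk12, show d - 8 + 8 = d by omega] at this
    omega
  have hsplit : L * d = L * (d - 8) + L * 8 := by rw [← mul_add]; congr 1; omega
  have hbig : L * 8 ≤ L * (d - 8) := Nat.mul_le_mul_left _ (by omega)
  by_cases hc : k ≤ 4 * L
  · exact comb 0 k (by omega) (by rw [mult_zero']; omega) (h8 k hk (by omega))
  · by_cases hc2 : k = 4 * L + 1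
    · exact comb 2 (4 * L - 1) (by omega) (hrec 2 le_rfl (by omega)) (h8 _ (by omega) (by omega))
    · exact comb (k - 4 * L) (4 * L) (by omega) (hrec _ (by omega) (by omega))
        (h8 _ (by omega) (by omega))

theorem mult_pos_one (L : ℕ) (hL : 8 ≤ L) (hL' : L < 16) : ∀ d, 8 ≤ d → ∀ k, 2 ≤ k →
    2 * k ≤ L * d → 0 < mult L d k := by
  intro d
  induction d using Nat.strong_induction_on with
  | _ d ih =>
    intro hd k hk hk2
    by_cases h : d < 16
    · exact mult_pos_base L d k hL hL' hd h hk hk2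
    · exact mult_pos_step L d k hL (by omega) hk hk2
        (fun j h1 h2 => ih 8 (by omega) le_rfl j h1 h2)
        (fun j h1 h2 => ih (d - 8) (by omega) (by omega) j h1 h2)

theorem mult_pos (L : ℕ) (hL : 8 ≤ L) : ∀ d, 8 ≤ d → ∀ k, 2 ≤ k →
    2 * k ≤ L * d → 0 < mult L d k := by
  intro d
  induction d using Nat.strong_induction_on with
  | _ d ih =>
    intro hd k hk hk2
    by_cases h : d < 16
    · rw [mult_symm L d k hk2]
      exact mult_pos_one d hd h L hL k hk (by rw [mul_comm d]; exact hk2)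
    · exact mult_pos_step L d k hL (by omega) hk hk2
        (fun j h1 h2 => ih 8 (by omega) le_rfl j h1 h2)
        (fun j h1 h2 => ih (d - 8) (by omega) (by omega) j h1 h2)

theorem mult_pos' (L d k : ℕ) (hL : 8 ≤ L) (hd : 8 ≤ d) (hk : k ≠ 1) (hk2 : 2 * k ≤ L * d) :
    0 < mult L d k := by
  rcases Nat.eq_zero_or_pos k with rfl | h
  · rw [mult_zero']; omega
  · exact mult_pos L hL d hd k (by omega) hk2

end Unimodal

/-! ### The central multiplicity -/
section Center

theorem center_bound (t : ℕ) :
    (3 * t).choose t ≤ (2 * t ^ 2 + 1) ^ 2 * (t ^ 2 + 1) * mult (2 * t) (2 * t) (2 * t ^ 2) := by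
  set M := mult (2 * t) (2 * t) (2 * t ^ 2) with hM
  have h1 : ∀ k, mult (2 * t) t k ≤ (2 * t ^ 2 + 1) * M := by
    intro k
    by_cases hk : 2 * t * t < 2 * k
    · rw [mult_big _ _ _ hk]; omega
    · have := mult_pair (2 * t) t k (2 * t * t - 2 * k) (even_two_mul t) (by omega)
      rw [show t + t = 2 * t by ring, show 2 * t * t = 2 * t ^ 2 by ring] at this
      exact this.trans (Nat.mul_le_mul_right _ (by omega))
  have h2 : ∀ k, monoCount (2 * t) t k ≤ (t ^ 2 + 1) * ((2 * t ^ 2 + 1) * M) := by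
    intro k
    refine (monoCount_le_sum _ _ _).trans ?_
    refine (Finset.sum_le_card_nsmul _ _ _ (fun j _ => h1 j)).trans ?_
    rw [Finset.card_range, smul_eq_mul, show 2 * t * t / 2 = t ^ 2 by
      rw [show 2 * t * t = 2 * t ^ 2 by ring]; omega]
  have h3 := gP_sum t (2 * t)
  rw [show t + 2 * t = 3 * t by ring] at h3
  rw [← h3]
  refine (Finset.sum_le_card_nsmul _ _ ((t ^ 2 + 1) * ((2 * t ^ 2 + 1) * M))
    (fun j _ => by rw [← monoCount_eq]; exact h2 j)).trans ?_
  rw [Finset.card_range, smul_eq_mul, show t * (2 * t) = 2 * t ^ 2 by ring]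
  exact le_of_eq (by ring)

theorem choose_growth (t : ℕ) :
    (3 * (t + 1)).choose (t + 1) * ((2 * t + 2) * (2 * t + 1)) =
      (3 * t).choose t * (3 * (3 * t + 2) * (3 * t + 1)) := by
  have e1 := Nat.add_one_mul_choose_eq (3 * t + 2) t
  have e2 := Nat.choose_mul_succ_eq (3 * t + 1) t
  have e3 := Nat.choose_mul_succ_eq (3 * t) t
  rw [show 3 * t + 1 + 1 - t = 2 * t + 2 by omega] at e2
  rw [show 3 * t + 1 - t = 2 * t + 1 by omega] at e3
  rw [show 3 * (t + 1) = 3 * t + 2 + 1 by ring]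
  have ht : 0 < t + 1 := by omega
  apply Nat.eq_of_mul_eq_mul_right ht
  calc _ = ((3 * t + 2 + 1).choose (t + 1) * (t + 1)) * ((2 * t + 2) * (2 * t + 1)) := by ring
    _ = (3 * t + 3) * ((3 * t + 1 + 1).choose t * (2 * t + 2)) * (2 * t + 1) := by
      rw [← e1]; ring
    _ = (3 * t + 3) * ((3 * t + 1).choose t * (2 * t + 1)) * (3 * t + 2) := by
      rw [← e2]; ring
    _ = _ := by rw [← e3]; ring

theorem choose_lower (t : ℕ) (ht : 11 ≤ t) :
    3 ^ (t + 1) * ((2 * t ^ 2 + 1) ^ 2 * (t ^ 2 + 1)) ≤ 2 ^ 18 * (3 * t).choose t := by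
  induction t, ht using Nat.le_induction with
  | base => decide +kernel
  | succ t ht ih =>
    have hg := choose_growth t
    have hpos : 0 < (2 * t + 2) * (2 * t + 1) := by positivity
    apply Nat.le_of_mul_le_mul_right _ hpos
    have hpoly : 3 * ((2 * (t + 1) ^ 2 + 1) ^ 2 * ((t + 1) ^ 2 + 1)) * ((2 * t + 2) * (2 * t + 1)) ≤
        ((2 * t ^ 2 + 1) ^ 2 * (t ^ 2 + 1)) * (3 * (3 * t + 2) * (3 * t + 1)) := by
      obtain ⟨u, rfl⟩ : ∃ u, t = u + 11 := ⟨t - 11, by omega⟩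
      ring_nf
      gcongr <;> norm_num
    calc 3 ^ (t + 1 + 1) * ((2 * (t + 1) ^ 2 + 1) ^ 2 * ((t + 1) ^ 2 + 1)) *
          ((2 * t + 2) * (2 * t + 1))
        = 3 ^ (t + 1) * (3 * ((2 * (t + 1) ^ 2 + 1) ^ 2 * ((t + 1) ^ 2 + 1)) *
          ((2 * t + 2) * (2 * t + 1))) := by ring
      _ ≤ 3 ^ (t + 1) * (((2 * t ^ 2 + 1) ^ 2 * (t ^ 2 + 1)) *
          (3 * (3 * t + 2) * (3 * t + 1))) := Nat.mul_le_mul_left _ hpoly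
      _ = (3 ^ (t + 1) * ((2 * t ^ 2 + 1) ^ 2 * (t ^ 2 + 1))) *
          (3 * (3 * t + 2) * (3 * t + 1)) := by ring
      _ ≤ (2 ^ 18 * (3 * t).choose t) * (3 * (3 * t + 2) * (3 * t + 1)) :=
          Nat.mul_le_mul_right _ ih
      _ = 2 ^ 18 * ((3 * (t + 1)).choose (t + 1) * ((2 * t + 2) * (2 * t + 1))) := by
          rw [hg]; ring
      _ = _ := by ring

theorem center_lower (t : ℕ) (ht : 11 ≤ t) :
    3 ^ (t + 1) ≤ 2 ^ 18 * mult (2 * t) (2 * t) (2 * t ^ 2) := by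
  have h1 := choose_lower t ht
  have h2 := center_bound t
  have hpos : 0 < (2 * t ^ 2 + 1) ^ 2 * (t ^ 2 + 1) := by positivity
  apply Nat.le_of_mul_le_mul_right _ hpos
  calc _ ≤ _ := h1
    _ ≤ _ := Nat.mul_le_mul_left _ h2
    _ = _ := by ring

end Center
/-! ### Assembling -/
section Final

theorem mult_pad (a b t k : ℕ) (ha : 8 ≤ a) (hb : 8 ≤ b) (ht : 4 ≤ t)
    (hk : 2 * t ^ 2 + 2 ≤ k) (hk2 : 2 * k ≤ (2 * t + a) * (2 * t + b)) :
    mult (2 * t) (2 * t) (2 * t ^ 2) ≤ mult (2 * t + a) (2 * t + b) k := by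
  have comb : ∀ k2 k3, 2 * t ^ 2 + k2 + k3 = k → k2 ≠ 1 → k3 ≠ 1 → k2 ≤ a * t →
      2 * k3 ≤ (2 * t + a) * b →
      mult (2 * t) (2 * t) (2 * t ^ 2) ≤ mult (2 * t + a) (2 * t + b) k := by
    intro k2 k3 hsum h2 h3 hk2a hk3b
    have p1 := mult_pos' (2 * t) a k2 (by omega) ha h2 (by nlinarith)
    have p2 := mult_pos' (2 * t + a) b k3 (by omega) hb h3 hk3b
    have q1 := mult_mul (2 * t) (2 * t) a (2 * t ^ 2) k2 p1
    rw [mult_symm (2 * t) (2 * t + a) _ (by nlinarith)] at q1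
    have q2 := mult_mul (2 * t + a) (2 * t) b (2 * t ^ 2 + k2) k3 p2
    rw [hsum] at q2
    exact q1.trans q2
  have hexp : (2 * t + a) * (2 * t + b) = 4 * t ^ 2 + 2 * (a * t) + (2 * t + a) * b := by ring
  have hat : 32 ≤ a * t := by nlinarith
  have hbb : 64 ≤ (2 * t + a) * b := by nlinarith
  by_cases h1 : k ≤ 2 * t ^ 2 + a * t
  · exact comb (k - 2 * t ^ 2) 0 (by omega) (by omega) (by omega) (by omega) (by omega)
  by_cases h2 : k = 2 * t ^ 2 + a * t + 1
  · exact comb (a * t - 1) 2 (by omega) (by omega) (by omega) (by omega) (by omega)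
  · exact comb (a * t) (k - 2 * t ^ 2 - a * t) (by omega) (by omega) (by omega) (by omega)
      (by omega)

theorem const_le_one : 3 * Real.sqrt 3 / (Real.sqrt 2 * Real.pi ^ 2) ≤ 1 := by
  have h3 : Real.sqrt 3 ≤ 2 := by
    rw [Real.sqrt_le_left (by norm_num)]; norm_num
  have h2 : 1 ≤ Real.sqrt 2 := by
    rw [Real.one_le_sqrt]; norm_num
  have hp := Real.pi_gt_three
  rw [div_le_one (by positivity)]
  nlinarith

theorem small_piece (a b : ℕ) (v : ℝ) (hav : (a : ℝ) ≤ v) (hvb : v ≤ (b : ℝ) ^ 2)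
    (hab : 2 ^ (4 * b) ≤ a ^ 9) : (2 : ℝ) ^ Real.sqrt v ≤ v ^ ((9 : ℝ) / 4) := by
  have h1 : Real.sqrt v ≤ b := by
    rw [Real.sqrt_le_left (by positivity)]; exact hvb
  have ha0 : (0 : ℝ) ≤ a := by positivity
  calc (2 : ℝ) ^ Real.sqrt v ≤ (2 : ℝ) ^ (b : ℝ) :=
        Real.rpow_le_rpow_of_exponent_le (by norm_num) h1
    _ = ((2 : ℝ) ^ (4 * b)) ^ ((1 : ℝ) / 4) := by
        rw [← Real.rpow_natCast, ← Real.rpow_mul (by norm_num)]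
        congr 1; push_cast; ring
    _ ≤ ((a : ℝ) ^ 9) ^ ((1 : ℝ) / 4) := by
        apply Real.rpow_le_rpow (by positivity) _ (by norm_num)
        exact_mod_cast hab
    _ = (a : ℝ) ^ ((9 : ℝ) / 4) := by
        rw [← Real.rpow_natCast, ← Real.rpow_mul ha0]
        congr 1; norm_num
    _ ≤ v ^ ((9 : ℝ) / 4) := Real.rpow_le_rpow ha0 hav (by norm_num)

theorem small_v (v : ℝ) (h2 : 2 ≤ v) (h256 : v ≤ 256) :
    (2 : ℝ) ^ Real.sqrt v ≤ v ^ ((9 : ℝ) / 4) := by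
  by_cases c1 : v ≤ 4
  · exact small_piece 2 2 v (by norm_num; linarith) (by norm_num; linarith) (by norm_num)
  by_cases c2 : v ≤ 16
  · exact small_piece 4 4 v (by norm_num; linarith) (by norm_num; linarith) (by norm_num)
  by_cases c3 : v ≤ 64
  · exact small_piece 16 8 v (by norm_num; linarith) (by norm_num; linarith) (by norm_num)
  by_cases c4 : v ≤ 169
  · exact small_piece 64 13 v (by norm_num; linarith) (by norm_num; linarith) (by norm_num)
  · exact small_piece 169 16 v (by norm_num; linarith) (by norm_num; linarith) (by norm_num)

theorem large_v (v : ℝ) (t : ℕ) (ht : 11 ≤ t) (h256 : 256 ≤ v)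
    (hv : v ≤ 2 * ((t : ℝ) + 1) ^ 2 + 1) :
    (2 : ℝ) ^ Real.sqrt v / v ^ ((9 : ℝ) / 4) ≤ 3 ^ (t + 1) / 2 ^ 18 := by
  have ht' : (11 : ℝ) ≤ t := by exact_mod_cast ht
  have h1 : Real.sqrt v ≤ 3 / 2 * ((t + 1 : ℕ) : ℝ) := by
    rw [Real.sqrt_le_left (by positivity)]
    push_cast
    nlinarith
  have h2 : (2 : ℝ) ^ ((3 : ℝ) / 2) ≤ 3 := by
    have : (2 : ℝ) ^ ((3 : ℝ) / 2) = Real.sqrt 8 := by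
      rw [Real.sqrt_eq_rpow, show (8 : ℝ) = 2 ^ (3 : ℝ) by norm_num, ← Real.rpow_mul (by norm_num)]
      norm_num
    rw [this, Real.sqrt_le_left (by norm_num)]
    norm_num
  have h3 : (2 : ℝ) ^ Real.sqrt v ≤ 3 ^ (t + 1) := by
    calc (2 : ℝ) ^ Real.sqrt v ≤ (2 : ℝ) ^ (3 / 2 * ((t + 1 : ℕ) : ℝ)) :=
          Real.rpow_le_rpow_of_exponent_le (by norm_num) h1
      _ = ((2 : ℝ) ^ ((3 : ℝ) / 2)) ^ (t + 1) := by
          rw [Real.rpow_mul (by norm_num), Real.rpow_natCast]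
      _ ≤ 3 ^ (t + 1) := pow_le_pow_left₀ (by positivity) h2 _
  have h4 : (2 : ℝ) ^ 18 ≤ v ^ ((9 : ℝ) / 4) := by
    calc (2 : ℝ) ^ 18 = (256 : ℝ) ^ ((9 : ℝ) / 4) := by
          rw [show (256 : ℝ) = 2 ^ (8 : ℝ) by norm_num, ← Real.rpow_mul (by norm_num)]
          norm_num
      _ ≤ _ := Real.rpow_le_rpow (by norm_num) h256 (by norm_num)
  gcongr

end Final

/-- For `18 ≤ ℓ ≤ m` and `2 ≤ k ≤ ℓm/2`, with `n = 2⌊(ℓ−8)/2⌋` if `ℓm` is even and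
`n = 2⌊(ℓ−8)/2⌋ − 1` if `ℓm` is odd, and `v = min(k, n²/2)` as a real number, one has
`p_k(ℓ,m) − p_{k−1}(ℓ,m) ≥ C · 2^{√v} / v^{9/4}` where `C = 3√3/(√2·π²)`. -/
theorem rect_qbinomial_lower_bound (ℓ m k n : ℕ) (v : ℝ)
    (hl : 18 ≤ ℓ) (hlm : ℓ ≤ m) (hk1 : 2 ≤ k) (hk2 : 2 * k ≤ ℓ * m)
    (hn : n = if Even (ℓ * m) then 2 * ((ℓ - 8) / 2) else 2 * ((ℓ - 8) / 2) - 1)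
    (hv : v = min (k : ℝ) ((n : ℝ) ^ 2 / 2)) :
    ((rectPartitions k ℓ m : ℝ) - (rectPartitions (k - 1) ℓ m : ℝ)) ≥
      (3 * Real.sqrt 3 / (Real.sqrt 2 * Real.pi ^ 2)) *
        (2 : ℝ) ^ Real.sqrt v / v ^ ((9 : ℝ) / 4) := by
  have hsymm : mult m ℓ k = mult ℓ m k := mult_symm m ℓ k (by rw [mul_comm m]; exact hk2)
  have hdiff := rect_diff ℓ m k (by omega) hk2
  rw [hsymm] at hdiff
  have hD : ((rectPartitions k ℓ m : ℝ) - (rectPartitions (k - 1) ℓ m : ℝ)) = mult ℓ m k := by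
    rw [← hdiff]; push_cast; ring
  rw [hD, ge_iff_le, mul_div_assoc]
  obtain ⟨T, hT⟩ : ∃ T, T = (ℓ - 8) / 2 := ⟨_, rfl⟩
  rw [← hT] at hn
  have hnT : n ≤ 2 * T := by rw [hn]; split_ifs <;> omega
  have hn9 : 9 ≤ n := by rw [hn]; split_ifs <;> omega
  have hnT' : (n : ℝ) ≤ 2 * T := by exact_mod_cast hnT
  have hn9' : (9 : ℝ) ≤ n := by exact_mod_cast hn9
  have hvk : v ≤ k := by rw [hv]; exact min_le_left _ _
  have hvT : v ≤ 2 * (T : ℝ) ^ 2 := by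
    have : v ≤ (n : ℝ) ^ 2 / 2 := by rw [hv]; exact min_le_right _ _
    nlinarith
  have hv2 : 2 ≤ v := by
    rw [hv]
    refine le_min (by exact_mod_cast hk1) (by nlinarith)
  have hpos : 0 ≤ (2 : ℝ) ^ Real.sqrt v / v ^ ((9 : ℝ) / 4) := by positivity
  refine (mul_le_of_le_one_left hpos const_le_one).trans ?_
  by_cases hc : v ≤ 256
  · have h1 : (1 : ℝ) ≤ mult ℓ m k := by
      exact_mod_cast mult_pos ℓ (by omega) m (by omega) k hk1 hk2
    refine le_trans ?_ h1
    exact div_le_one_of_le₀ (small_v v hv2 hc) (by positivity)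
  · push Not at hc
    obtain ⟨t, htdef⟩ : ∃ t, t = min T (Nat.sqrt ((k - 2) / 2)) := ⟨_, rfl⟩
    have htT : t ≤ T := by rw [htdef]; exact min_le_left _ _
    have hts : t ≤ Nat.sqrt ((k - 2) / 2) := by rw [htdef]; exact min_le_right _ _
    have htk : 2 * t ^ 2 + 2 ≤ k := by
      have := Nat.le_sqrt'.mp hts
      omega
    have hvt : v ≤ 2 * ((t : ℝ) + 1) ^ 2 + 1 := by
      rcases min_choice T (Nat.sqrt ((k - 2) / 2)) with h | h
      · rw [h] at htdef
        subst htdef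
        nlinarith
      · rw [h] at htdef
        have hlt : (k - 2) / 2 < (t + 1) ^ 2 := by
          rw [htdef]; exact Nat.lt_succ_sqrt' _
        have hk' : k ≤ 2 * (t + 1) ^ 2 + 1 := by omega
        have : (k : ℝ) ≤ 2 * ((t : ℝ) + 1) ^ 2 + 1 := by exact_mod_cast hk'
        linarith
    have ht11 : 11 ≤ t := by
      by_contra hlt
      have : (t : ℝ) ≤ 10 := by exact_mod_cast (by omega : t ≤ 10)
      have h0 : (0 : ℝ) ≤ t := by positivity
      nlinarith
    refine (large_v v t ht11 hc.le hvt).trans ?_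
    have hpad := mult_pad (ℓ - 2 * t) (m - 2 * t) t k (by omega) (by omega) (by omega) htk
      (by rw [Nat.add_sub_cancel' (by omega), Nat.add_sub_cancel' (by omega)]; exact hk2)
    rw [Nat.add_sub_cancel' (by omega), Nat.add_sub_cancel' (by omega)] at hpad
    have hcen := (center_lower t ht11).trans (Nat.mul_le_mul_left _ hpad)
    rw [div_le_iff₀ (by positivity), mul_comm]
    exact_mod_cast hcen
end

section
/- For every natural number n ≥ 2, one has (in ℤ) b_{2n+1}(n) − b_{2n}(n) = (b_{2n+1}(n−1) − b_{2n}(n−1)) − 1. -/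
/-- `distinctOddPartitions k n` is the number of partitions of `k` into distinct odd
parts, each part at most `2n - 1`. -/
noncomputable def distinctOddPartitions (k n : ℕ) : ℕ :=
  Nat.card {π : Nat.Partition k // π.parts.Nodup ∧ ∀ i ∈ π.parts, Odd i ∧ i ≤ 2 * n - 1}

lemma odd_sum_zero (t : Multiset ℕ) (ho : ∀ i ∈ t, Odd i) (hs : t.sum = 0) : t = 0 := by
  rcases Multiset.empty_or_exists_mem t with h | ⟨a, ha⟩
  · exact h
  · obtain ⟨u, rfl⟩ := Multiset.exists_cons_of_mem ha
    obtain ⟨c, hc⟩ := ho a (Multiset.mem_cons_self a u)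
    rw [Multiset.sum_cons] at hs
    omega

lemma odd_sum_one (t : Multiset ℕ) (ho : ∀ i ∈ t, Odd i) (hs : t.sum = 1) : t = {1} := by
  rcases Multiset.empty_or_exists_mem t with h | ⟨a, ha⟩
  · subst h; simp at hs
  · obtain ⟨u, rfl⟩ := Multiset.exists_cons_of_mem ha
    obtain ⟨c, hc⟩ := ho a (Multiset.mem_cons_self a u)
    rw [Multiset.sum_cons] at hs
    have hu := odd_sum_zero u (fun i hi => ho i (Multiset.mem_cons_of_mem hi)) (by omega)
    have h1 : a = 1 := by omega
    subst hu; rw [h1]; rfl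

lemma odd_sum_two (t : Multiset ℕ) (hn : t.Nodup) (ho : ∀ i ∈ t, Odd i) (hs : t.sum = 2) :
    False := by
  rcases Multiset.empty_or_exists_mem t with h | ⟨a, ha⟩
  · subst h; simp at hs
  · obtain ⟨u, rfl⟩ := Multiset.exists_cons_of_mem ha
    obtain ⟨c, hc⟩ := ho a (Multiset.mem_cons_self a u)
    rw [Multiset.sum_cons] at hs
    have hu := odd_sum_one u (fun i hi => ho i (Multiset.mem_cons_of_mem hi)) (by omega)
    have h1 : a = 1 := by omega
    subst hu; subst h1; simp at hn

/-- The set counted by `distinctOddPartitions`. -/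
def oddSet (k n : ℕ) : Set (Nat.Partition k) :=
  {π | π.parts.Nodup ∧ ∀ i ∈ π.parts, Odd i ∧ i ≤ 2 * n - 1}

lemma dop_eq (k n : ℕ) : distinctOddPartitions k n = (oddSet k n).ncard := rfl

lemma mem_of_new (k n : ℕ) (π : Nat.Partition k) (h : π ∈ oddSet k (n + 1))
    (h' : π ∉ oddSet k n) : 2 * n + 1 ∈ π.parts := by
  by_contra hc
  refine h' ⟨h.1, fun i hi => ⟨(h.2 i hi).1, ?_⟩⟩
  obtain ⟨c, hc'⟩ := (h.2 i hi).1
  have h2 := (h.2 i hi).2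
  have : i ≠ 2 * n + 1 := fun e => hc (e ▸ hi)
  omega

lemma oddSet_mono (k n : ℕ) : oddSet k n ⊆ oddSet k (n + 1) := fun π h =>
  ⟨h.1, fun i hi => ⟨(h.2 i hi).1, by have := (h.2 i hi).2; omega⟩⟩

lemma first_eq (n : ℕ) : oddSet (2 * (n + 1) + 1) (n + 1) = oddSet (2 * (n + 1) + 1) n := by
  refine Set.Subset.antisymm (fun π h => ?_) (oddSet_mono _ _)
  by_contra h'
  obtain ⟨u, hu⟩ := Multiset.exists_cons_of_mem (mem_of_new _ _ π h h')
  have hs := π.parts_sum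
  have hn := h.1
  have ho := h.2
  rw [hu] at hs hn ho
  rw [Multiset.sum_cons] at hs
  exact odd_sum_two u (Multiset.nodup_cons.1 hn).2
    (fun i hi => (ho i (Multiset.mem_cons_of_mem hi)).1) (by omega)

/-- The partition `(2n+1) + 1` of `2(n+1)`. -/
def extraPart (n : ℕ) : Nat.Partition (2 * (n + 1)) where
  parts := (2 * n + 1) ::ₘ {1}
  parts_pos := by
    intro i hi
    simp at hi
    omega
  parts_sum := by
    simp
    omega

lemma second_eq (n : ℕ) (hn : 1 ≤ n) :
    oddSet (2 * (n + 1)) (n + 1) = insert (extraPart n) (oddSet (2 * (n + 1)) n) := by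
  refine Set.Subset.antisymm (fun π h => ?_) (Set.insert_subset ?_ (oddSet_mono _ _))
  · by_cases h' : π ∈ oddSet (2 * (n + 1)) n
    · exact Or.inr h'
    left
    obtain ⟨u, hu⟩ := Multiset.exists_cons_of_mem (mem_of_new _ _ π h h')
    have hs := π.parts_sum
    have ho := h.2
    rw [hu] at hs ho
    rw [Multiset.sum_cons] at hs
    have := odd_sum_one u (fun i hi => (ho i (Multiset.mem_cons_of_mem hi)).1) (by omega)
    apply Nat.Partition.ext
    rw [hu, this]
    rfl
  · refine ⟨?_, ?_⟩
    · simp [extraPart]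
      omega
    · intro i hi
      simp [extraPart] at hi
      rcases hi with rfl | rfl
      · exact ⟨⟨n, rfl⟩, by omega⟩
      · exact ⟨odd_one, by omega⟩

lemma extra_not_mem (n : ℕ) : extraPart n ∉ oddSet (2 * (n + 1)) n := by
  intro h
  have := (h.2 (2 * n + 1) (by simp [extraPart])).2
  omega

/-- For `n ≥ 2`, one has `b_{2n+1}(n) − b_{2n}(n) = (b_{2n+1}(n−1) − b_{2n}(n−1)) − 1`. -/
theorem distinctOdd_diff_special (n : ℕ) (hn : 2 ≤ n) :
    (distinctOddPartitions (2 * n + 1) n : ℤ) - (distinctOddPartitions (2 * n) n : ℤ) =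
      ((distinctOddPartitions (2 * n + 1) (n - 1) : ℤ) -
        (distinctOddPartitions (2 * n) (n - 1) : ℤ)) - 1 := by
  obtain ⟨m, rfl⟩ : ∃ m, n = m + 1 := ⟨n - 1, by omega⟩
  rw [Nat.add_sub_cancel]
  simp only [dop_eq]
  rw [first_eq, second_eq m (by omega),
    Set.ncard_insert_of_notMem (extra_not_mem m) (Set.toFinite _)]
  push_cast
  ring
end

section
/- Let G be a finite group all of whose irreducible complex characters are real-valued (for example, a symmetric group), and let V, W, U be finite-dimensional irreducible complex representations of G. Let m denote the multiplicity of U in V ⊗ W, i.e. the natural number m with (1/|G|)·∑_{g∈G} χ_V(g)·χ_W(g)·χ_U(g) = m. Then m ≤ min{dim V, dim W, dim U}. -/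
open CategoryTheory

/-- An endomorphism of finite order over `ℂ` has a basis of eigenvectors. -/
lemma mmdb_exists_eigenbasis {M : Type*} [AddCommGroup M] [Module ℂ M] [FiniteDimensional ℂ M]
    (f : Module.End ℂ M) (n : ℕ) (hn : 0 < n) (hf : f ^ n = 1) :
    ∃ (ι : Type) (_ : Fintype ι) (b : Module.Basis ι ℂ M) (μ : ι → ℂ),
      (∀ i, f (b i) = μ i • b i) := by
  classical
  have hss : f.IsSemisimple := by
    apply Module.End.isSemisimple_of_squarefree_aeval_eq_zero (p := Polynomial.X ^ n - 1)
    · apply Polynomial.Separable.squarefree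
      have h := Polynomial.separable_X_pow_sub_C (F := ℂ) (n := n) 1 (by exact_mod_cast hn.ne')
        one_ne_zero
      simpa using h
    · simp [hf]
  have htop : ⨆ μ, f.eigenspace μ = ⊤ := by
    rw [← Module.End.iSup_maxGenEigenspace_eq_top f]
    exact iSup_congr fun μ => (hss.isFinitelySemisimple.maxGenEigenspace_eq_eigenspace μ).symm
  have hint : DirectSum.IsInternal f.eigenspace :=
    DirectSum.isInternal_submodule_of_iSupIndep_of_iSup_eq_top f.eigenspaces_iSupIndep htop
  let b := hint.collectedBasis (fun μ => Module.finBasis ℂ (f.eigenspace μ))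
  have : Finite (Σ μ : ℂ, Fin (Module.finrank ℂ (f.eigenspace μ))) :=
    Module.Finite.finite_basis b
  refine ⟨_, Fintype.ofFinite _, b, fun i => i.1, fun i => ?_⟩
  have := hint.collectedBasis_mem (fun μ => Module.finBasis ℂ (f.eigenspace μ)) i
  exact Module.End.mem_eigenspace_iff.mp this

lemma mmdb_trace {M : Type*} [AddCommGroup M] [Module ℂ M] {ι : Type} [Fintype ι]
    (b : Module.Basis ι ℂ M) (f : Module.End ℂ M) (μ : ι → ℂ) (h : ∀ i, f (b i) = μ i • b i) :
    LinearMap.trace ℂ M f = ∑ i, μ i := by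
  classical
  rw [LinearMap.trace_eq_matrix_trace ℂ b, Matrix.trace]
  refine Finset.sum_congr rfl fun i _ => ?_
  simp [LinearMap.toMatrix_apply, h]

lemma mmdb_char {G : Type} [Group G] [Fintype G] (V : FDRep ℂ G) (g : G) :
    ‖V.character g‖ ≤ Module.finrank ℂ V ∧
      V.character g⁻¹ = (starRingEnd ℂ) (V.character g) := by
  have hn : 0 < Fintype.card G := Fintype.card_pos
  have hf : (V.ρ g) ^ (Fintype.card G) = 1 := by
    rw [← map_pow, pow_card_eq_one, map_one]
  obtain ⟨ι, _, b, μ, h⟩ := mmdb_exists_eigenbasis (V.ρ g) _ hn hf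
  have hpow : ∀ i, ∀ k : ℕ, ((V.ρ g) ^ k) (b i) = μ i ^ k • b i := by
    intro i k
    induction k with
    | zero => simp
    | succ k ih => rw [pow_succ', Module.End.mul_apply, ih, map_smul, h, smul_smul, pow_succ]
  have hμ : ∀ i, μ i ^ Fintype.card G = 1 := by
    intro i
    have h1 := hpow i (Fintype.card G)
    rw [hf, Module.End.one_apply] at h1
    have h2 : (1 - μ i ^ Fintype.card G) • b i = 0 := by
      rw [sub_smul, one_smul, ← h1, sub_self]
    have := (smul_eq_zero.mp h2).resolve_right (b.ne_zero i)
    exact (sub_eq_zero.mp this).symm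
  have hnorm : ∀ i, ‖μ i‖ = 1 := fun i => Complex.norm_eq_one_of_pow_eq_one (hμ i) hn.ne'
  have hinv : ∀ i, V.ρ g⁻¹ (b i) = (starRingEnd ℂ) (μ i) • b i := by
    intro i
    have hc : (starRingEnd ℂ) (μ i) * μ i = 1 := by
      rw [mul_comm, Complex.mul_conj, Complex.normSq_eq_norm_sq, hnorm]; simp
    have h1 : V.ρ g⁻¹ (V.ρ g (b i)) = b i := by
      rw [← Module.End.mul_apply, ← map_mul, inv_mul_cancel, map_one, Module.End.one_apply]
    rw [h, map_smul] at h1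
    calc V.ρ g⁻¹ (b i) = (starRingEnd ℂ) (μ i) • (μ i • V.ρ g⁻¹ (b i)) := by
          rw [smul_smul, hc, one_smul]
      _ = _ := by rw [h1]
  have e1 : V.character g = ∑ i, μ i := mmdb_trace b _ μ h
  have e2 : V.character g⁻¹ = ∑ i, (starRingEnd ℂ) (μ i) := mmdb_trace b _ _ hinv
  refine ⟨?_, ?_⟩
  · rw [e1, Module.finrank_eq_card_basis b]
    refine (norm_sum_le _ _).trans ?_
    simp [hnorm]
  · rw [e1, e2, map_sum]

lemma mmdb_sum_sq {G : Type} [Group G] [Fintype G] (V : FDRep ℂ G) [Simple V] :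
    ∑ g : G, ‖V.character g‖ ^ 2 = Fintype.card G := by
  have h0 : (Nat.card G : ℂ) ≠ 0 := by simp
  haveI : Invertible (Nat.card G : ℂ) := invertibleOfNonzero h0
  have h := FDRep.char_orthonormal V V
  rw [if_pos ⟨Iso.refl _⟩, inv_mul_eq_iff_eq_mul₀ h0] at h
  have h2 : ((∑ g : G, ‖V.character g‖ ^ 2 : ℝ) : ℂ) = (Fintype.card G : ℝ) := by
    push_cast
    rw [← Nat.card_eq_fintype_card, ← mul_one (Nat.card G : ℂ)]
    refine Eq.trans ?_ (h.trans (by simp))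
    refine Finset.sum_congr rfl fun g _ => ?_
    rw [(mmdb_char V g).2, Complex.mul_conj, Complex.normSq_eq_norm_sq]
    push_cast; rfl
  exact_mod_cast h2

lemma mmdb_bound {G : Type} [Group G] [Fintype G] (V W U : FDRep ℂ G) [Simple W] [Simple U]
    (m : ℕ)
    (hm : (1 / (Fintype.card G : ℂ)) * ∑ g : G,
        V.character g * W.character g * U.character g = (m : ℂ)) :
    m ≤ Module.finrank ℂ V := by
  have hn : (0 : ℝ) < Fintype.card G := by exact_mod_cast Fintype.card_pos
  have hn' : (Fintype.card G : ℂ) ≠ 0 := by exact_mod_cast hn.ne'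
  have h1 : ∑ g : G, V.character g * W.character g * U.character g
      = (Fintype.card G : ℂ) * m := by
    rw [← hm]; field_simp
  have h2 : (Fintype.card G : ℝ) * m ≤ Fintype.card G * Module.finrank ℂ V := by
    calc (Fintype.card G : ℝ) * m
        = ‖∑ g : G, V.character g * W.character g * U.character g‖ := by rw [h1]; simp
      _ ≤ ∑ g : G, ‖V.character g * W.character g * U.character g‖ := norm_sum_le _ _
      _ ≤ ∑ g : G, (Module.finrank ℂ V : ℝ) *
            ((‖W.character g‖ ^ 2 + ‖U.character g‖ ^ 2) / 2) := by
          refine Finset.sum_le_sum fun g _ => ?_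
          rw [mul_assoc, norm_mul, norm_mul]
          refine mul_le_mul (mmdb_char V g).1 ?_ (by positivity) (by positivity)
          nlinarith [sq_nonneg (‖W.character g‖ - ‖U.character g‖)]
      _ = _ := by
          rw [← Finset.mul_sum, ← Finset.sum_div, Finset.sum_add_distrib, mmdb_sum_sq,
            mmdb_sum_sq]
          ring
  exact_mod_cast le_of_mul_le_mul_left h2 hn

/-- For a finite group `G` all of whose irreducible complex characters are real-valued,
and irreducible finite-dimensional complex representations `V, W, U` of `G`, the
multiplicity `m` of `U` in `V ⊗ W` satisfies `m ≤ min {dim V, dim W, dim U}`. -/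
theorem multiplicity_min_dim_bound (G : Type) [Group G] [Fintype G]
    (hreal : ∀ X : FDRep ℂ G, Simple X → ∀ g : G,
      (starRingEnd ℂ) (X.character g) = X.character g)
    (V W U : FDRep ℂ G) [Simple V] [Simple W] [Simple U] (m : ℕ)
    (hm : (1 / (Fintype.card G : ℂ)) * ∑ g : G,
        V.character g * W.character g * U.character g = (m : ℂ)) :
    m ≤ min (Module.finrank ℂ V) (min (Module.finrank ℂ W) (Module.finrank ℂ U)) := by
  refine le_min (mmdb_bound V W U m hm) (le_min (mmdb_bound W V U m ?_) (mmdb_bound U V W m ?_))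
  · rw [← hm]
    exact congrArg _ (Finset.sum_congr rfl fun g _ => by ring)
  · rw [← hm]
    exact congrArg _ (Finset.sum_congr rfl fun g _ => by ring)
end

section
/- (Sylvester's unimodality theorem) For all natural numbers ℓ, m and every k with 1 ≤ k and 2k ≤ ℓm, one has p_{k−1}(ℓ,m) ≤ p_k(ℓ,m); that is, the coefficients of the Gaussian binomial coefficient binom(ℓ+m,m)_q form a unimodal sequence. -/
namespace Sylv
open MvPolynomial

/-- multisets with exactly `l` elements in `[0,m]` summing to `k` -/
def Good (l m k : ℕ) (M : Multiset ℕ) : Prop :=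
  M.card = l ∧ M.sum = k ∧ ∀ i ∈ M, i ≤ m

def S (l m k : ℕ) : Set (ℕ →₀ ℕ) := {s | Good l m k (Finsupp.toMultiset s)}

def equivPart (l m k : ℕ) : {M : Multiset ℕ // Good l m k M} ≃
    {π : Nat.Partition k // Multiset.card π.parts ≤ l ∧ ∀ i ∈ π.parts, i ≤ m} where
  toFun M := ⟨Nat.Partition.ofSums k M.1 M.2.2.1, by
    obtain ⟨M, h1, h2, h3⟩ := M
    refine ⟨?_, ?_⟩
    · exact (Multiset.card_le_card (Multiset.filter_le _ _)).trans h1.le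
    · intro i hi
      exact h3 i (Multiset.mem_of_mem_filter hi)⟩
  invFun π := ⟨π.1.parts + Multiset.replicate (l - Multiset.card π.1.parts) 0, by
    obtain ⟨π, h1, h2⟩ := π
    refine ⟨?_, ?_, ?_⟩
    · simp; omega
    · simp [π.parts_sum]
    · intro i hi
      rcases Multiset.mem_add.1 hi with h | h
      · exact h2 i h
      · rw [Multiset.eq_of_mem_replicate h]; omega⟩
  left_inv M := by
    obtain ⟨M, h1, h2, h3⟩ := M
    apply Subtype.ext
    have h := Multiset.filter_add_not (fun i => i ≠ 0) M
    have h0 : Multiset.filter (fun i => ¬ i ≠ 0) M = Multiset.replicate (l - (Multiset.filter (fun i => i ≠ 0) M).card) 0 := by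
      rw [Multiset.eq_replicate]
      constructor
      · have := congrArg Multiset.card h
        rw [Multiset.card_add] at this
        omega
      · intro b hb
        simpa using (Multiset.mem_filter.1 hb).2
    rw [h0] at h
    exact h
  right_inv π := by
    obtain ⟨π, h1, h2⟩ := π
    apply Subtype.ext
    apply Nat.Partition.ext
    show Multiset.filter (fun i => i ≠ 0) (π.parts + Multiset.replicate _ 0) = π.parts
    rw [Multiset.filter_add, Multiset.filter_eq_self.2, Multiset.filter_eq_nil.2, add_zero]
    · intro a ha; simp [Multiset.eq_of_mem_replicate ha]
    · intro a ha; exact (π.parts_pos ha).ne'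

noncomputable def equivS (l m k : ℕ) : S l m k ≃
    {π : Nat.Partition k // Multiset.card π.parts ≤ l ∧ ∀ i ∈ π.parts, i ≤ m} :=
  (Equiv.subtypeEquiv Multiset.toFinsupp.symm.toEquiv (fun _ => Iff.rfl)).trans (equivPart l m k)

noncomputable abbrev V (l m k : ℕ) : Submodule ℚ (MvPolynomial ℕ ℚ) := restrictSupport ℚ (S l m k)

noncomputable def E (m : ℕ) : Derivation ℚ (MvPolynomial ℕ ℚ) (MvPolynomial ℕ ℚ) :=
  mkDerivation ℚ (fun i => ((m : ℚ) - i) • X (i+1))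
noncomputable def F : Derivation ℚ (MvPolynomial ℕ ℚ) (MvPolynomial ℕ ℚ) :=
  mkDerivation ℚ (fun i => (i : ℚ) • X (i-1))

instance (l m k : ℕ) : Finite (S l m k) := Finite.of_equiv _ (equivS l m k).symm

instance (l m k : ℕ) : Module.Finite ℚ (V l m k) :=
  Module.Finite.of_basis (basisRestrictSupport ℚ (S l m k))

lemma finrank_V (l m k : ℕ) : Module.finrank ℚ (V l m k) = rectPartitions k l m := by
  rw [Module.finrank_eq_nat_card_basis (basisRestrictSupport ℚ (S l m k))]
  exact Nat.card_congr (equivS l m k)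

lemma mon_mem {l m k : ℕ} {s : ℕ →₀ ℕ} (r : ℚ) (h : s ∈ S l m k) : monomial s r ∈ V l m k := by
  rw [mem_restrictSupport_iff]
  exact fun t ht => by
    have := support_monomial_subset ht
    simp at this
    rwa [this]

lemma V_ind {l m k : ℕ} {T : MvPolynomial ℕ ℚ →ₗ[ℚ] MvPolynomial ℕ ℚ}
    {W : Submodule ℚ (MvPolynomial ℕ ℚ)}
    (h : ∀ s ∈ S l m k, T (monomial s 1) ∈ W) {p} (hp : p ∈ V l m k) : T p ∈ W := by
  rw [p.as_sum, map_sum]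
  refine Submodule.sum_mem _ fun s hs => ?_
  have : monomial s (coeff s p) = coeff s p • monomial s (1:ℚ) := by simp [smul_monomial]
  rw [this, map_smul]
  exact W.smul_mem _ (h s ((mem_restrictSupport_iff ..).1 hp hs))

lemma split {s : ℕ →₀ ℕ} {i : ℕ} (h : i ∈ s.support) : ∃ t, s = t + Finsupp.single i 1 :=
  ⟨s - Finsupp.single i 1, by
    rw [tsub_add_cancel_of_le]
    simp at h ⊢; omega⟩

lemma E_mem {l m k : ℕ} {p} (hp : p ∈ V l m k) : E m p ∈ V l m (k+1) := by
  refine V_ind (T := (E m).toLinearMap) (fun s hs => ?_) hp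
  show E m (monomial s 1) ∈ _
  rw [E, mkDerivation_monomial, one_smul]
  refine Submodule.sum_mem _ fun i hi => ?_
  obtain ⟨t, rfl⟩ := split hi
  obtain ⟨h1, h2, h3⟩ := hs
  simp only [map_add, Finsupp.toMultiset_single, one_smul, Multiset.card_add, Multiset.card_singleton, Multiset.sum_add, Multiset.sum_singleton, Multiset.mem_add, Multiset.mem_singleton] at h1 h2 h3
  beta_reduce
  rw [add_tsub_cancel_right, smul_eq_mul, mul_smul_comm, X, monomial_mul]
  by_cases him : i = m
  · simp [him]
  apply Submodule.smul_mem
  apply mon_mem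
  have := h3 i (Or.inr rfl)
  refine ⟨by simpa using h1, by simp [-Finsupp.sum_toMultiset]; omega, fun j hj => ?_⟩
  simp only [map_add, Finsupp.toMultiset_single, one_smul, Multiset.mem_add, Multiset.mem_singleton] at hj
  rcases hj with hj | hj
  · exact h3 j (Or.inl hj)
  · omega

lemma F_mem {l m k : ℕ} {p} (hp : p ∈ V l m (k+1)) : F p ∈ V l m k := by
  refine V_ind (T := F.toLinearMap) (fun s hs => ?_) hp
  show F (monomial s 1) ∈ _
  rw [F, mkDerivation_monomial, one_smul]
  refine Submodule.sum_mem _ fun i hi => ?_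
  obtain ⟨t, rfl⟩ := split hi
  obtain ⟨h1, h2, h3⟩ := hs
  simp only [map_add, Finsupp.toMultiset_single, one_smul, Multiset.card_add, Multiset.card_singleton, Multiset.sum_add, Multiset.sum_singleton, Multiset.mem_add, Multiset.mem_singleton] at h1 h2 h3
  beta_reduce
  rw [add_tsub_cancel_right, smul_eq_mul, mul_smul_comm, X, monomial_mul]
  by_cases him : i = 0
  · simp [him]
  apply Submodule.smul_mem
  apply mon_mem
  have := h3 i (Or.inr rfl)
  refine ⟨by simpa using h1, by simp [-Finsupp.sum_toMultiset]; omega, fun j hj => ?_⟩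
  simp only [map_add, Finsupp.toMultiset_single, one_smul, Multiset.mem_add, Multiset.mem_singleton] at hj
  rcases hj with hj | hj
  · exact h3 j (Or.inl hj)
  · omega

lemma F_zero {l m : ℕ} {p} (hp : p ∈ V l m 0) : F p = 0 := by
  rw [← Submodule.mem_bot ℚ]
  refine V_ind (T := F.toLinearMap) (fun s hs => ?_) hp
  show F (monomial s 1) ∈ _
  rw [F, mkDerivation_monomial, one_smul]
  refine Submodule.sum_mem _ fun i hi => ?_
  obtain ⟨t, rfl⟩ := split hi
  obtain ⟨h1, h2, h3⟩ := hs
  have : i = 0 := by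
    simp at h2; omega
  simp [this]

lemma comm_eq (m : ℕ) : ⁅E m, F⁆ = mkDerivation ℚ (fun i : ℕ => (2 * (i:ℚ) - m) • (X i : MvPolynomial ℕ ℚ)) := by
  apply derivation_ext
  intro i
  rw [Derivation.commutator_apply]
  rcases i with _ | i
  · simp [E, F, mkDerivation_X]
  · simp only [E, F, mkDerivation_X, Derivation.map_smul, smul_smul, Nat.add_sub_cancel, ← sub_smul]
    congr 1
    push_cast; ring

lemma sum_toMultiset (s : ℕ →₀ ℕ) : (Finsupp.toMultiset s).sum = s.sum fun i n => n * i := by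
  simp

lemma comm_V {l m k : ℕ} {p} (hp : p ∈ V l m k) :
    E m (F p) = F (E m p) + (2 * (k:ℚ) - m * l) • p := by
  have key : ⁅E m, F⁆ p - (2 * (k:ℚ) - m * l) • p = 0 := by
    rw [← Submodule.mem_bot ℚ]
    refine V_ind (T := (⁅E m, F⁆).toLinearMap - (2 * (k:ℚ) - m * l) • LinearMap.id) (fun s hs => ?_) hp
    show ⁅E m, F⁆ (monomial s 1) - (2 * (k:ℚ) - m * l) • (monomial s 1) ∈ _
    rw [Submodule.mem_bot, comm_eq, mkDerivation_monomial, one_smul, sub_eq_zero]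
    have h : ∀ i ∈ s.support, (monomial (s - Finsupp.single i 1) ((s i : ℕ) : ℚ)) • ((2 * (i:ℚ) - m) • (X i : MvPolynomial ℕ ℚ)) = ((s i : ℚ) * (2 * (i:ℚ) - m)) • monomial s (1:ℚ) := by
      intro i hi
      obtain ⟨t, rfl⟩ := split hi
      rw [add_tsub_cancel_right, smul_eq_mul, mul_smul_comm, X, monomial_mul, smul_monomial, smul_monomial]
      congr 1
      simp [mul_comm]
    rw [Finsupp.sum, Finset.sum_congr rfl h, ← Finset.sum_smul]
    congr 1
    obtain ⟨h1, h2, -⟩ := hs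
    rw [Finsupp.card_toMultiset] at h1
    rw [sum_toMultiset] at h2
    rw [← h1, ← h2, Finsupp.sum, Finsupp.sum]
    push_cast
    rw [Finset.mul_sum, Finset.mul_sum, ← Finset.sum_sub_distrib]
    refine Finset.sum_congr rfl fun i _ => ?_
    simp only [id]
    ring
  rw [Derivation.commutator_apply, sub_sub, sub_eq_zero] at key
  exact key

lemma inj {l m k : ℕ} (hk : 2 * k < l * m) {p} (hp : p ∈ V l m k) (hE : E m p = 0) : p = 0 := by
  -- strengthen: along the chain `F^n p`
  have hk' : (2 * k : ℚ) < m * l := by rw [mul_comm (m:ℚ)]; exact_mod_cast hk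
  have aux : ∀ (j : ℕ) (c : ℚ) (q : MvPolynomial ℕ ℚ), j ≤ k → c ≤ 0 → q ∈ V l m j →
      F (E m q) = c • q → q = 0 := by
    intro j
    induction j with
    | zero =>
      intro c q hj hc hq h1
      have h := comm_V hq
      rw [F_zero hq, h1, ← add_smul, map_zero] at h
      refine (smul_eq_zero.1 h.symm).resolve_left ?_
      have : (0:ℚ) ≤ k := by positivity
      push_cast; linarith
    | succ j ih =>
      intro c q hj hc hq h1
      have h := comm_V hq
      rw [h1, ← add_smul] at h
      have hjk : ((j + 1 : ℕ) : ℚ) ≤ k := by exact_mod_cast hj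
      have hlt : c + (2 * ((j + 1 : ℕ) : ℚ) - m * l) < 0 := by linarith
      have h0 := ih _ (F q) (by omega) hlt.le (F_mem hq) (by rw [h, Derivation.map_smul])
      rw [h0, map_zero] at h
      exact (smul_eq_zero.1 h.symm).resolve_left hlt.ne
  exact aux k 0 p le_rfl le_rfl hp (by rw [hE, map_zero, zero_smul])
end Sylv

open Sylv in
theorem sylvester_unimodality (ℓ m k : ℕ) (hk : 1 ≤ k) (hk2 : 2 * k ≤ ℓ * m) :
    rectPartitions (k - 1) ℓ m ≤ rectPartitions k ℓ m := by
  obtain ⟨k, rfl⟩ : ∃ j, k = j + 1 := ⟨k - 1, by omega⟩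
  rw [Nat.add_sub_cancel, ← finrank_V, ← finrank_V]
  apply LinearMap.finrank_le_finrank_of_injective (f := (E m).toLinearMap.restrict (p := V ℓ m k) (q := V ℓ m (k+1)) (fun p hp => E_mem hp))
  rw [injective_iff_map_eq_zero]
  rintro ⟨p, hp⟩ h
  apply Subtype.ext
  exact inj (by omega) hp (congrArg Subtype.val h)
end

section
/- For all natural numbers ℓ, m ≥ 1 with n = ℓm, and every k with 1 ≤ k ≤ n/2, one has (in ℤ) p_k(ℓ,m) − p_{k−1}(ℓ,m) ≤ binom(n,k) − binom(n,k−1). -/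
open Finset

abbrev Lev (α : Type) [DecidableEq α] (j : ℕ) := {A : Finset α // A.card = j}

noncomputable def downOp (α : Type) [Fintype α] [DecidableEq α] (j : ℕ) :
    (Lev α (j+1) → ℚ) →ₗ[ℚ] (Lev α j → ℚ) where
  toFun g B := ∑ A : Lev α (j+1), if B.1 ⊆ A.1 then g A else 0
  map_add' f g := by
    ext B; simp only [Pi.add_apply, ← Finset.sum_add_distrib]
    refine Finset.sum_congr rfl fun A _ => ?_
    split_ifs <;> simp
  map_smul' c g := by
    ext B; simp only [Pi.smul_apply, smul_eq_mul, Finset.mul_sum, RingHom.id_apply]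
    refine Finset.sum_congr rfl fun A _ => ?_
    split_ifs <;> simp

/-- counting upper covers minus lower covers -/
lemma cover_count {α : Type} [Fintype α] [DecidableEq α] {j : ℕ} (B B' : Lev α j) :
    (((univ : Finset (Finset α)).filter
        (fun A => A.card = j+1 ∧ B.1 ⊆ A ∧ B'.1 ⊆ A)).card : ℚ)
    = (((univ : Finset (Finset α)).filter
        (fun C => C.card + 1 = j ∧ C ⊆ B.1 ∧ C ⊆ B'.1)).card : ℚ)
      + if B = B' then (Fintype.card α : ℚ) - 2 * j else 0 := by
  obtain ⟨B, hB⟩ := B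
  obtain ⟨B', hB'⟩ := B'
  simp only [Subtype.mk.injEq]
  split_ifs with h
  · subst h
    have h1 : (univ : Finset (Finset α)).filter (fun A => A.card = j+1 ∧ B ⊆ A ∧ B ⊆ A)
        = (Bᶜ).image (fun a => insert a B) := by
      ext A
      simp only [mem_filter, mem_univ, true_and, and_self, mem_image, mem_compl]
      constructor
      · rintro ⟨hc, hs⟩
        have : (A \ B).card = 1 := by rw [card_sdiff_of_subset hs]; omega
        obtain ⟨a, ha⟩ := card_eq_one.1 this
        refine ⟨a, ?_, ?_⟩
        · have : a ∈ A \ B := by simp [ha]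
          exact (mem_sdiff.1 this).2
        · rw [insert_eq, ← ha, sdiff_union_of_subset hs]
      · rintro ⟨a, ha, rfl⟩
        exact ⟨by rw [card_insert_of_notMem ha, hB], subset_insert _ _⟩
    have h2 : (univ : Finset (Finset α)).filter (fun C => C.card + 1 = j ∧ C ⊆ B ∧ C ⊆ B)
        = B.image (fun a => B.erase a) := by
      ext A
      simp only [mem_filter, mem_univ, true_and, and_self, mem_image]
      constructor
      · rintro ⟨hc, hs⟩
        have : (B \ A).card = 1 := by rw [card_sdiff_of_subset hs]; omega
        obtain ⟨a, ha⟩ := card_eq_one.1 this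
        have hm : a ∈ B \ A := by simp [ha]
        refine ⟨a, (mem_sdiff.1 hm).1, ?_⟩
        rw [erase_eq, ← ha, Finset.sdiff_sdiff_eq_self hs]
      · rintro ⟨a, ha, rfl⟩
        have := card_pos.2 ⟨a, ha⟩
        exact ⟨by rw [card_erase_of_mem ha]; omega, erase_subset _ _⟩
    rw [h1, h2, card_image_of_injOn, card_image_of_injOn, card_compl, hB, Nat.cast_sub]
    · ring
    · rw [← hB]; exact card_le_univ _
    · intro a ha b hb hab
      by_contra hne
      have : a ∈ B.erase b := mem_erase.2 ⟨hne, ha⟩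
      simp only at hab
      rw [← hab] at this
      simp at this
    · intro a ha b hb hab
      by_contra hne
      simp only at hab
      have : a ∈ insert b B := hab ▸ mem_insert_self a B
      simp at ha
      rcases mem_insert.1 this with h | h
      · exact hne h
      · exact ha h
  · rw [add_zero]
    have hui := card_union_add_card_inter B B'
    have hu : j + 1 ≤ (B ∪ B').card := by
      by_contra hlt
      have e1 : B = B ∪ B' := eq_of_subset_of_card_le subset_union_left (by omega)
      have e2 : B' = B ∪ B' := eq_of_subset_of_card_le subset_union_right (by omega)
      exact h (e1.trans e2.symm)
    by_cases hc : (B ∪ B').card = j + 1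
    · have h1 : (univ : Finset (Finset α)).filter (fun A => A.card = j+1 ∧ B ⊆ A ∧ B' ⊆ A)
          = {B ∪ B'} := by
        ext A
        simp only [mem_filter, mem_univ, true_and, mem_singleton]
        constructor
        · rintro ⟨h1, h2, h3⟩
          exact (eq_of_subset_of_card_le (union_subset h2 h3) (by omega)).symm
        · rintro rfl
          exact ⟨hc, subset_union_left, subset_union_right⟩
      have h2 : (univ : Finset (Finset α)).filter (fun C => C.card + 1 = j ∧ C ⊆ B ∧ C ⊆ B')
          = {B ∩ B'} := by
        ext A
        simp only [mem_filter, mem_univ, true_and, mem_singleton]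
        constructor
        · rintro ⟨h1, h2, h3⟩
          exact eq_of_subset_of_card_le (subset_inter h2 h3) (by omega)
        · rintro rfl
          exact ⟨by omega, inter_subset_left, inter_subset_right⟩
      rw [h1, h2]; simp
    · rw [filter_eq_empty_iff.2, filter_eq_empty_iff.2]
      · rintro C - ⟨h1, h2, h3⟩
        have := card_le_card (subset_inter h2 h3)
        omega
      · rintro C - ⟨h1, h2, h3⟩
        have := card_le_card (union_subset h2 h3)
        omega

lemma ker_up {α : Type} [Fintype α] [DecidableEq α] {j : ℕ} (hj : 2 * j < Fintype.card α)
    (f : Lev α j → ℚ)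
    (hf : ∀ A : Lev α (j+1), ∑ B : Lev α j, (if B.1 ⊆ A.1 then f B else 0) = 0) : f = 0 := by
  have key : ∑ A ∈ (univ : Finset (Finset α)).filter (fun A => A.card = j+1),
        (∑ B : Lev α j, (if B.1 ⊆ A then f B else 0))^2
      = ∑ C ∈ (univ : Finset (Finset α)).filter (fun A => A.card + 1 = j),
        (∑ B : Lev α j, (if C ⊆ B.1 then f B else 0))^2
        + ((Fintype.card α : ℚ) - 2 * j) * ∑ B, (f B)^2 := by
    have hL : ∀ (P : Finset α → Prop) [DecidablePred P] (R : Finset α → Finset α → Prop)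
        [∀ a b, Decidable (R a b)],
        ∑ A ∈ (univ : Finset (Finset α)).filter P,
          (∑ B : Lev α j, (if R A B.1 then f B else 0))^2
        = ∑ B : Lev α j, ∑ B' : Lev α j, f B * f B' *
          (((univ : Finset (Finset α)).filter (fun A => P A ∧ R A B.1 ∧ R A B'.1)).card : ℚ) := by
      intro P _ R _
      simp only [sq, Finset.sum_mul_sum]
      rw [Finset.sum_comm]
      refine Finset.sum_congr rfl fun B _ => ?_
      rw [Finset.sum_comm]
      refine Finset.sum_congr rfl fun B' _ => ?_
      rw [← Finset.filter_filter, Finset.card_filter, Nat.cast_sum, Finset.mul_sum]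
      refine Finset.sum_congr rfl fun A _ => ?_
      by_cases h1 : R A B.1 <;> by_cases h2 : R A B'.1 <;> simp [h1, h2]
    rw [hL _ (fun A B => B ⊆ A), hL _ (fun A B => A ⊆ B)]
    simp only [cover_count, mul_add, Finset.sum_add_distrib]
    congr 1
    rw [Finset.mul_sum]
    refine Finset.sum_congr rfl fun B _ => ?_
    simp; ring
  rw [Finset.sum_eq_zero] at key
  · have h0 : (0:ℚ) < (Fintype.card α : ℚ) - 2 * j := by
      have : ((2 * j : ℕ) : ℚ) < Fintype.card α := by exact_mod_cast hj
      push_cast at this; linarith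
    have h1 : 0 ≤ ∑ C ∈ (univ : Finset (Finset α)).filter (fun A => A.card + 1 = j),
        (∑ B : Lev α j, (if C ⊆ B.1 then f B else 0))^2 :=
      Finset.sum_nonneg fun _ _ => sq_nonneg _
    have h2 : 0 ≤ ∑ B, (f B)^2 := Finset.sum_nonneg fun _ _ => sq_nonneg _
    have h3 : ∑ B, (f B)^2 = 0 := by nlinarith
    rw [Finset.sum_eq_zero_iff_of_nonneg (fun _ _ => sq_nonneg _)] at h3
    ext B
    simpa using h3 B (mem_univ _)
  · intro A hA
    rw [hf ⟨A, (mem_filter.1 hA).2⟩]; simp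

lemma downOp_ker {α : Type} [Fintype α] [DecidableEq α] {j : ℕ} (hj : 2 * j < Fintype.card α) :
    Module.finrank ℚ (LinearMap.ker (downOp α j)) + (Fintype.card α).choose j
      ≤ (Fintype.card α).choose (j+1) := by
  let M : Matrix (Lev α j) (Lev α (j+1)) ℚ := Matrix.of fun B A => if B.1 ⊆ A.1 then 1 else 0
  have hM : downOp α j = M.mulVecLin := by
    refine LinearMap.ext fun g => funext fun B => ?_
    simp only [Matrix.mulVecLin_apply, Matrix.mulVec, dotProduct, downOp, M, Matrix.of_apply, LinearMap.coe_mk,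
      AddHom.coe_mk, ite_mul, one_mul, zero_mul]
  have hr : M.rank = Fintype.card (Lev α j) := by
    rw [← Matrix.rank_transpose, Matrix.rank, LinearMap.finrank_range_of_inj]
    · simp
    · rw [← LinearMap.ker_eq_bot, LinearMap.ker_eq_bot']
      intro f hf
      refine ker_up hj f fun A => ?_
      have := congrFun hf A
      simpa only [Matrix.mulVecLin_apply, Matrix.mulVec, dotProduct, M, Matrix.of_apply, Matrix.transpose_apply,
        ite_mul, one_mul, zero_mul, Pi.zero_apply] using this
  have := LinearMap.finrank_range_add_finrank_ker (downOp α j)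
  rw [Module.finrank_fintype_fun_eq_card, hM] at this
  rw [hM]
  rw [Matrix.rank] at hr
  have c1 : ∀ i, Fintype.card (Lev α i) = (Fintype.card α).choose i := fun i =>
    Fintype.card_finset_len i
  rw [hr, c1, c1] at this
  omega

lemma abstract_bound {α : Type} [Fintype α] [DecidableEq α] {j : ℕ}
    (hj : 2 * j < Fintype.card α) {T T' : Type} [Fintype T] [Fintype T']
    (t : Lev α j → T) (t' : Lev α (j+1) → T')
    (ht : Function.Surjective t) (ht' : Function.Surjective t')
    (hinv : ∀ h : T' → ℚ, ∀ B B', t B = t B' → downOp α j (h ∘ t') B = downOp α j (h ∘ t') B') :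
    Fintype.card T' + (Fintype.card α).choose j ≤ Fintype.card T + (Fintype.card α).choose (j+1) := by
  obtain ⟨s, hs⟩ := ht.hasRightInverse
  let P : (T' → ℚ) →ₗ[ℚ] (Lev α (j+1) → ℚ) := LinearMap.funLeft ℚ ℚ t'
  let D' : (T' → ℚ) →ₗ[ℚ] (T → ℚ) := (LinearMap.funLeft ℚ ℚ s) ∘ₗ (downOp α j) ∘ₗ P
  have h1 := LinearMap.finrank_range_add_finrank_ker D'
  have h2 : Module.finrank ℚ (LinearMap.range D') ≤ Fintype.card T := by
    have := Submodule.finrank_le (LinearMap.range D')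
    rwa [Module.finrank_fintype_fun_eq_card] at this
  rw [Module.finrank_fintype_fun_eq_card] at h1
  have hP : Function.Injective P := LinearMap.funLeft_injective_of_surjective ℚ ℚ t' ht'
  have hk : (LinearMap.ker D').map P ≤ LinearMap.ker (downOp α j) := by
    rintro _ ⟨h, hh, rfl⟩
    rw [LinearMap.mem_ker]
    ext B
    have e := congrFun (LinearMap.mem_ker.1 hh) (t B)
    have := hinv h B (s (t B)) (hs (t B)).symm
    exact this.trans e
  have h3 := Submodule.finrank_mono hk
  rw [← (Submodule.equivMapOfInjective P hP (LinearMap.ker D')).finrank_eq] at h3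
  have := downOp_ker hj
  omega

/-- row sizes -/
def rowSize {l m : ℕ} (A : Finset (Fin l × Fin m)) (i : Fin l) : ℕ :=
  ((univ : Finset (Fin m)).filter (fun x => (i, x) ∈ A)).card

lemma sum_rowSize {l m : ℕ} (A : Finset (Fin l × Fin m)) : ∑ i, rowSize A i = A.card := by
  rw [Finset.card_eq_sum_card_fiberwise (f := Prod.fst) (t := univ) (fun _ _ => by simp)]
  refine Finset.sum_congr rfl fun i _ => ?_
  unfold rowSize
  refine Finset.card_bij (fun x _ => (i, x)) ?_ ?_ ?_
  · intro x hx; simpa using hx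
  · intro x _ y _ h; simpa using h
  · rintro ⟨a, b⟩ h
    simp only [mem_filter] at h
    obtain ⟨h, rfl⟩ := h
    exact ⟨b, by simpa using h, rfl⟩

def rows {l m : ℕ} (A : Finset (Fin l × Fin m)) : Multiset ℕ :=
  (univ : Finset (Fin l)).val.map (rowSize A)

abbrev RP (k l m : ℕ) := {π : Nat.Partition k // Multiset.card π.parts ≤ l ∧ ∀ i ∈ π.parts, i ≤ m}

def typ {l m j : ℕ} (A : Lev (Fin l × Fin m) j) : RP j l m :=
  ⟨Nat.Partition.ofSums j (rows A.1) ((sum_rowSize A.1).trans A.2), by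
    change Multiset.card ((rows A.1).filter (· ≠ 0)) ≤ l ∧ ∀ i ∈ (rows A.1).filter (· ≠ 0), i ≤ m
    refine ⟨(Multiset.card_le_card (Multiset.filter_le _ _)).trans ?_, ?_⟩
    · simp [rows]
    · intro i hi
      have := Multiset.mem_of_mem_filter hi
      simp only [rows, Multiset.mem_map] at this
      obtain ⟨a, -, rfl⟩ := this
      exact (card_le_univ _).trans (by simp)⟩

lemma typ_eq {l m j : ℕ} {A B : Lev (Fin l × Fin m) j} : typ A = typ B ↔ rows A.1 = rows B.1 := by
  constructor
  · intro h
    have h1 : (rows A.1).filter (· ≠ 0) = (rows B.1).filter (· ≠ 0) :=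
      congrArg (fun t => t.1.parts) h
    ext x
    by_cases hx : x = 0
    · subst hx
      have hc : ∀ C : Finset (Fin l × Fin m),
          ((rows C).filter (· ≠ 0)).card + (rows C).count 0 = l := by
        intro C
        have e := congrArg Multiset.card (Multiset.filter_add_not (fun x => x ≠ 0) (rows C))
        rw [Multiset.card_add] at e
        have e2 : (rows C).card = l := by simp [rows]
        rw [e2] at e
        simpa [Multiset.count_eq_card_filter_eq, eq_comm] using e
      have := hc A.1
      have := hc B.1
      rw [h1] at *
      omega
    · have := congrArg (Multiset.count x) h1
      rwa [Multiset.count_filter_of_pos (p := fun y => y ≠ 0) hx,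
        Multiset.count_filter_of_pos (p := fun y => y ≠ 0) hx] at this
  · intro h
    apply Subtype.ext
    apply Nat.Partition.ext
    change (rows A.1).filter (· ≠ 0) = (rows B.1).filter (· ≠ 0)
    rw [h]

lemma typ_surj {l m j : ℕ} : Function.Surjective (typ : Lev (Fin l × Fin m) j → RP j l m) := by
  rintro ⟨π, h1, h2⟩
  set L : List ℕ := (π.parts + Multiset.replicate (l - π.parts.card) 0).toList with hL
  have hlen : L.length = l := by simp [hL]; omega
  have hle : ∀ x ∈ L, x ≤ m := by
    intro x hx
    rw [hL, Multiset.mem_toList, Multiset.mem_add] at hx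
    rcases hx with hx | hx
    · exact h2 x hx
    · rw [Multiset.eq_of_mem_replicate hx]; exact Nat.zero_le _
  let r : Fin l → ℕ := fun i => L.get (i.cast hlen.symm)
  have hr : ∀ i, r i ≤ m := fun i => hle _ (List.get_mem _ _)
  let A : Finset (Fin l × Fin m) := univ.filter (fun p => p.2.1 < r p.1)
  have hA : rowSize A = r := by
    ext i
    simp only [rowSize, A, mem_filter, mem_univ, true_and]
    rw [Fin.card_filter_val_lt]
    exact min_eq_right (hr i)
  have hrows : rows A = π.parts + Multiset.replicate (l - π.parts.card) 0 := by
    rw [rows, hA, Fin.univ_val_map]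
    have : List.ofFn r = L := by
      apply List.ext_get
      · simp [hlen]
      · intro n h1 h2
        simp [r]
    rw [this, hL, Multiset.coe_toList]
  have hcard : A.card = j := by
    rw [← sum_rowSize]
    change (rows A).sum = j
    rw [hrows]; simp [π.parts_sum]
  refine ⟨⟨A, hcard⟩, ?_⟩
  apply Subtype.ext
  apply Nat.Partition.ext
  change (rows A).filter (· ≠ 0) = π.parts
  rw [hrows, Multiset.filter_add, Multiset.filter_eq_self.2, Multiset.filter_eq_nil.2, add_zero]
  · intro a ha; simp [Multiset.eq_of_mem_replicate ha]
  · intro a ha; exact (π.parts_pos ha).ne'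

lemma exists_sym {l m : ℕ} (B B' : Finset (Fin l × Fin m)) (h : rows B = rows B') :
    ∃ e : (Fin l × Fin m) ≃ (Fin l × Fin m), B.map e.toEmbedding = B' ∧
      ∀ A : Finset (Fin l × Fin m), rows (A.map e.toEmbedding) = rows A := by
  have hf : ∀ c, Nonempty ({a // rowSize B a = c} ≃ {a // rowSize B' a = c}) := by
    intro c
    rw [← Fintype.card_eq, Fintype.card_subtype, Fintype.card_subtype]
    have := congrArg (Multiset.count c) h
    simp only [rows, Multiset.count_map] at this
    simpa only [Finset.card_def, Finset.filter_val, eq_comm] using this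
  let σ : Fin l ≃ Fin l := Equiv.ofFiberEquiv fun c => (hf c).some
  have hσ : ∀ i, rowSize B' (σ i) = rowSize B i := fun i => Equiv.ofFiberEquiv_map _ i
  have hg : ∀ i, Nonempty ({x // (i, x) ∈ B} ≃ {x // (σ i, x) ∈ B'}) := by
    intro i
    rw [← Fintype.card_eq, Fintype.card_subtype, Fintype.card_subtype]
    exact (hσ i).symm
  let τ : Fin l → Equiv.Perm (Fin m) := fun i => (hg i).some.extendSubtype
  have hτ : ∀ i x, (σ i, τ i x) ∈ B' ↔ (i, x) ∈ B := by
    intro i x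
    constructor
    · intro h
      by_contra hn
      exact (hg i).some.extendSubtype_not_mem x hn h
    · exact (hg i).some.extendSubtype_mem x
  let e := Equiv.prodShear σ τ
  have he : ∀ i x, e (i, x) = (σ i, τ i x) := fun _ _ => rfl
  refine ⟨e, ?_, ?_⟩
  · ext p
    obtain ⟨⟨i, x⟩, rfl⟩ := e.surjective p
    rw [he, hτ, ← he]
    simp
  · intro A
    have : rowSize A = fun i => rowSize (A.map e.toEmbedding) (σ i) := by
      ext i
      unfold rowSize
      refine Finset.card_bij (fun x _ => τ i x) ?_ ?_ ?_
      · intro x hx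
        rw [mem_filter] at hx ⊢
        refine ⟨mem_univ _, ?_⟩
        rw [← he]
        simpa using hx.2
      · intro x _ y _ hxy
        exact (τ i).injective hxy
      · intro y hy
        obtain ⟨x, rfl⟩ := (τ i).surjective y
        refine ⟨x, ?_, rfl⟩
        rw [mem_filter] at hy ⊢
        refine ⟨mem_univ _, ?_⟩
        have := hy.2
        rw [← he] at this
        simpa using this
    have hu : (univ : Finset (Fin l)).val.map σ = univ.val := by
      have := congrArg Finset.val (Finset.map_univ_equiv σ)
      simpa using this
    calc rows (A.map e.toEmbedding)
        = ((univ : Finset (Fin l)).val.map σ).map (rowSize (A.map e.toEmbedding)) := by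
          rw [hu, rows]
      _ = rows A := by rw [Multiset.map_map, rows, this]; rfl

lemma down_inv {l m j : ℕ} (h : RP (j+1) l m → ℚ) (B B' : Lev (Fin l × Fin m) j)
    (hB : typ B = typ B') :
    downOp _ j (h ∘ typ) B = downOp _ j (h ∘ typ) B' := by
  obtain ⟨e, he, hr⟩ := exists_sym B.1 B'.1 (typ_eq.1 hB)
  let E : Lev (Fin l × Fin m) (j+1) ≃ Lev (Fin l × Fin m) (j+1) :=
    (Equiv.finsetCongr e).subtypeEquiv (fun A => by simp)
  have hE : ∀ A, (E A).1 = A.1.map e.toEmbedding := fun A => rfl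
  change (∑ A : Lev (Fin l × Fin m) (j+1), if B.1 ⊆ A.1 then h (typ A) else 0)
    = ∑ A : Lev (Fin l × Fin m) (j+1), if B'.1 ⊆ A.1 then h (typ A) else 0
  rw [← Equiv.sum_comp E (fun A => if B'.1 ⊆ A.1 then h (typ A) else 0)]
  refine Finset.sum_congr rfl fun A _ => ?_
  have h1 : typ (E A) = typ A := typ_eq.2 (by rw [hE, hr])
  rw [h1]
  have h2 : B'.1 ⊆ (E A).1 ↔ B.1 ⊆ A.1 := by rw [hE, ← he, Finset.map_subset_map]
  simp only [h2]

/-- For `ℓ, m ≥ 1` with `n = ℓm` and `1 ≤ k` with `2k ≤ n`, one has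
`p_k(ℓ,m) − p_{k−1}(ℓ,m) ≤ binom(n,k) − binom(n,k−1)`. -/
theorem qbinomial_diff_upper_bound (ℓ m n k : ℕ) (hl : 1 ≤ ℓ) (hm : 1 ≤ m)
    (hn : n = ℓ * m) (hk : 1 ≤ k) (hk2 : 2 * k ≤ n) :
    (rectPartitions k ℓ m : ℤ) - (rectPartitions (k - 1) ℓ m : ℤ) ≤
      (Nat.choose n k : ℤ) - (Nat.choose n (k - 1) : ℤ) := by
  obtain ⟨j, rfl⟩ : ∃ j, k = j + 1 := ⟨k - 1, by omega⟩
  have hc : Fintype.card (Fin ℓ × Fin m) = n := by simp [hn]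
  have := abstract_bound (α := Fin ℓ × Fin m) (j := j) (by rw [hc]; omega)
    typ typ typ_surj typ_surj down_inv
  rw [hc] at this
  have hp : ∀ i, rectPartitions i ℓ m = Fintype.card (RP i ℓ m) := fun i =>
    Nat.card_eq_fintype_card
  rw [Nat.add_sub_cancel, hp, hp]
  omega
end

section
/- The function t ↦ p_{2t}(4,t) − p_{2t−1}(4,t) grows linearly: there exist real constants c₁, c₂ > 0 and a natural number t₀ such that for all t ≥ t₀, c₁·t ≤ p_{2t}(4,t) − p_{2t−1}(4,t) ≤ c₂·t. In particular, this difference is unbounded as t → ∞. -/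
section aux

/-- Multisets encoding partitions of `k` in an `l × m` rectangle. -/
def rectSet (k l m : ℕ) : Set (Multiset ℕ) :=
  {s | s.sum = k ∧ Multiset.card s ≤ l ∧ ∀ i ∈ s, 0 < i ∧ i ≤ m}

/-- Partitions in a rectangle are the same as multisets in `rectSet`. -/
def rectEquiv (k l m : ℕ) :
    {π : Nat.Partition k // Multiset.card π.parts ≤ l ∧ ∀ i ∈ π.parts, i ≤ m} ≃ rectSet k l m where
  toFun π := ⟨π.1.parts, π.1.parts_sum, π.2.1, fun i hi => ⟨π.1.parts_pos hi, π.2.2 i hi⟩⟩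
  invFun s := ⟨⟨s.1, fun {i} hi => (s.2.2.2 i hi).1, s.2.1⟩, s.2.2.1, fun i hi => (s.2.2.2 i hi).2⟩
  left_inv _ := rfl
  right_inv _ := rfl

theorem rect_eq_ncard (k l m : ℕ) : rectPartitions k l m = (rectSet k l m).ncard := by
  rw [rectPartitions, Nat.card_congr (rectEquiv k l m)]
  rfl

theorem rectSet_finite (k l m : ℕ) : (rectSet k l m).Finite :=
  @Set.toFinite _ _ (Finite.of_equiv _ (rectEquiv k l m))

theorem rect_zero_parts (k m : ℕ) : rectPartitions k 0 m = if k = 0 then 1 else 0 := by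
  rw [rect_eq_ncard]
  split_ifs with h
  · rw [Set.ncard_eq_one]
    refine ⟨0, ?_⟩
    ext s
    simp only [rectSet, Set.mem_ofPred_eq, Set.mem_singleton_iff]
    constructor
    · rintro ⟨-, h2, -⟩
      simpa using h2
    · rintro rfl
      simp [h]
  · rw [Set.ncard_eq_zero (rectSet_finite _ _ _)]
    ext s
    simp only [rectSet, Set.mem_ofPred_eq, Set.mem_empty_iff_false, iff_false]
    rintro ⟨h1, h2, -⟩
    have : s = 0 := by simpa using h2
    subst this
    simp at h1
    omega

theorem rect_zero_size (k l : ℕ) : rectPartitions k l 0 = if k = 0 then 1 else 0 := by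
  have key : ∀ s ∈ rectSet k l 0, s = 0 := by
    rintro s ⟨-, -, h3⟩
    refine Multiset.eq_zero_of_forall_notMem fun i hi => ?_
    have := h3 i hi
    omega
  rw [rect_eq_ncard]
  split_ifs with h
  · rw [Set.ncard_eq_one]
    refine ⟨0, ?_⟩
    ext s
    constructor
    · intro hs
      exact key s hs
    · rintro rfl
      simp [rectSet, h]
  · rw [Set.ncard_eq_zero (rectSet_finite _ _ _)]
    ext s
    simp only [Set.mem_empty_iff_false, iff_false]
    intro hs
    have := key s hs
    subst this
    have h1 := hs.1
    simp at h1
    omega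

theorem rect_succ (k l m : ℕ) : rectPartitions k (l + 1) (m + 1) =
    rectPartitions k (l + 1) m +
      if m + 1 ≤ k then rectPartitions (k - (m + 1)) l (m + 1) else 0 := by
  simp only [rect_eq_ncard]
  split_ifs with h
  · have hinj : Function.Injective (fun s : Multiset ℕ => (m + 1) ::ₘ s) :=
      fun a b hab => by simpa using hab
    rw [← Set.ncard_image_of_injective (rectSet (k - (m + 1)) l (m + 1)) hinj,
      ← Set.ncard_union_eq _ (rectSet_finite _ _ _) ((rectSet_finite _ _ _).image _)]
    · congr 1
      ext s
      constructor
      · rintro ⟨h1, h2, h3⟩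
        by_cases hm : m + 1 ∈ s
        · right
          obtain ⟨r, rfl⟩ := Multiset.exists_cons_of_mem hm
          refine ⟨r, ⟨?_, ?_, ?_⟩, rfl⟩
          · simp at h1
            omega
          · simpa using h2
          · exact fun i hi => h3 i (Multiset.mem_cons_of_mem hi)
        · left
          refine ⟨h1, h2, fun i hi => ?_⟩
          have h4 := h3 i hi
          have : i ≠ m + 1 := fun hh => hm (hh ▸ hi)
          omega
      · rintro (⟨h1, h2, h3⟩ | ⟨r, ⟨h1, h2, h3⟩, rfl⟩)
        · exact ⟨h1, h2, fun i hi => ⟨(h3 i hi).1, (h3 i hi).2.trans (Nat.le_succ m)⟩⟩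
        · refine ⟨?_, ?_, ?_⟩
          · simp
            omega
          · simpa using h2
          · intro i hi
            rcases Multiset.mem_cons.1 hi with rfl | hi
            · omega
            · exact h3 i hi
    · rw [Set.disjoint_left]
      rintro _ ⟨-, -, h3⟩ ⟨r, -, rfl⟩
      have := h3 (m + 1) (Multiset.mem_cons_self _ _)
      omega
  · rw [add_zero]
    congr 1
    ext s
    constructor
    · rintro ⟨h1, h2, h3⟩
      refine ⟨h1, h2, fun i hi => ?_⟩
      have h4 := h3 i hi
      have := Multiset.le_sum_of_mem hi
      omega
    · rintro ⟨h1, h2, h3⟩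
      exact ⟨h1, h2, fun i hi => ⟨(h3 i hi).1, (h3 i hi).2.trans (Nat.le_succ m)⟩⟩

/-- Generating function (the Gaussian binomial as a power series). -/
noncomputable def gaussSeries (l m : ℕ) : PowerSeries ℤ :=
  PowerSeries.mk fun k => (rectPartitions k l m : ℤ)

theorem gauss_zero_left (m : ℕ) : gaussSeries 0 m = 1 := by
  ext k
  simp [gaussSeries, rect_zero_parts, PowerSeries.coeff_one]

theorem gauss_zero_right (l : ℕ) : gaussSeries l 0 = 1 := by
  ext k
  simp [gaussSeries, rect_zero_size, PowerSeries.coeff_one]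

theorem gauss_succ (l m : ℕ) : gaussSeries (l + 1) (m + 1) =
    gaussSeries (l + 1) m + PowerSeries.X ^ (m + 1) * gaussSeries l (m + 1) := by
  ext k
  simp only [gaussSeries, PowerSeries.coeff_mk, map_add, PowerSeries.coeff_X_pow_mul', rect_succ]
  split_ifs <;> simp

local notation "Q" => (PowerSeries.X : PowerSeries ℤ)

theorem gauss_one (m : ℕ) : (1 - Q) * gaussSeries 1 m = 1 - Q ^ (m + 1) := by
  induction m with
  | zero => simp [gauss_zero_right]
  | succ m ih =>
    rw [gauss_succ, gauss_zero_left, mul_add, ih]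
    ring

theorem gauss_two (m : ℕ) : (1 - Q) * (1 - Q ^ 2) * gaussSeries 2 m =
    (1 - Q ^ (m + 1)) * (1 - Q ^ (m + 2)) := by
  induction m with
  | zero => simp [gauss_zero_right]
  | succ m ih =>
    rw [gauss_succ]
    linear_combination ih + (1 - Q ^ 2) * Q ^ (m + 1) * gauss_one (m + 1)

theorem gauss_three (m : ℕ) : (1 - Q) * (1 - Q ^ 2) * (1 - Q ^ 3) * gaussSeries 3 m =
    (1 - Q ^ (m + 1)) * (1 - Q ^ (m + 2)) * (1 - Q ^ (m + 3)) := by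
  induction m with
  | zero => simp [gauss_zero_right]
  | succ m ih =>
    rw [gauss_succ]
    linear_combination ih + (1 - Q ^ 3) * Q ^ (m + 1) * gauss_two (m + 1)

theorem gauss_four (m : ℕ) :
    (1 - Q) * (1 - Q ^ 2) * (1 - Q ^ 3) * (1 - Q ^ 4) * gaussSeries 4 m =
    (1 - Q ^ (m + 1)) * (1 - Q ^ (m + 2)) * (1 - Q ^ (m + 3)) * (1 - Q ^ (m + 4)) := by
  induction m with
  | zero => simp [gauss_zero_right]
  | succ m ih =>
    rw [gauss_succ]
    linear_combination ih + (1 - Q ^ 4) * Q ^ (m + 1) * gauss_three (m + 1)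

/-- Number of partitions of `n` into parts 2 and 3. -/
def g23 (n : ℕ) : ℤ := (n / 6 : ℕ) + if n % 6 = 1 then 0 else 1

/-- Number of partitions of `n` into parts 2, 3 and 4. -/
def f234 : ℕ → ℤ
  | 0 => g23 0
  | 1 => g23 1
  | 2 => g23 2
  | 3 => g23 3
  | n + 4 => f234 n + g23 (n + 4)

theorem g23_series : (1 - Q ^ 2) * (1 - Q ^ 3) * PowerSeries.mk g23 = 1 := by
  have : (1 - Q ^ 2) * (1 - Q ^ 3) * PowerSeries.mk g23 = PowerSeries.mk g23
      - Q ^ 2 * PowerSeries.mk g23 - Q ^ 3 * PowerSeries.mk g23 + Q ^ 5 * PowerSeries.mk g23 := by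
    ring
  rw [this]
  ext n
  simp only [map_add, map_sub, PowerSeries.coeff_X_pow_mul', PowerSeries.coeff_mk,
    PowerSeries.coeff_one]
  rcases lt_or_ge n 5 with h | h
  · interval_cases n <;> simp [g23]
  · obtain ⟨n, rfl⟩ := Nat.exists_eq_add_of_le' h
    have e1 : n + 5 - 2 = n + 3 := by omega
    have e2 : n + 5 - 3 = n + 2 := by omega
    have e3 : n + 5 - 5 = n := by omega
    rw [if_pos (by omega), if_pos (by omega), if_pos (by omega), if_neg (by omega), e1, e2, e3]
    simp only [g23]
    split_ifs <;> omega

theorem f234_series : (1 - Q ^ 4) * PowerSeries.mk f234 = PowerSeries.mk g23 := by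
  rw [sub_mul, one_mul]
  ext n
  simp only [map_sub, PowerSeries.coeff_X_pow_mul', PowerSeries.coeff_mk]
  rcases lt_or_ge n 4 with h | h
  · interval_cases n <;> simp [f234]
  · obtain ⟨n, rfl⟩ := Nat.exists_eq_add_of_le' h
    simp [f234]

theorem gauss_four_series (m : ℕ) : (1 - Q) * gaussSeries 4 m =
    (1 - Q ^ (m + 1)) * (1 - Q ^ (m + 2)) * (1 - Q ^ (m + 3)) * (1 - Q ^ (m + 4))
      * PowerSeries.mk f234 := by
  have h1 := g23_series
  rw [← f234_series] at h1
  rw [← gauss_four]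
  linear_combination (-(1 - Q) * gaussSeries 4 m) * h1

theorem diff_formula (t : ℕ) :
    (rectPartitions (2 * (t + 4)) 4 (t + 4) : ℤ) - rectPartitions (2 * (t + 4) - 1) 4 (t + 4) =
      f234 (2 * t + 8) - f234 (t + 3) - f234 (t + 2) - f234 (t + 1) - f234 t := by
  have h := congrArg (PowerSeries.coeff (2 * t + 8)) (gauss_four_series (t + 4))
  have e : (1 - Q ^ (t + 4 + 1)) * (1 - Q ^ (t + 4 + 2)) * (1 - Q ^ (t + 4 + 3))
      * (1 - Q ^ (t + 4 + 4)) * PowerSeries.mk f234 =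
      PowerSeries.mk f234 - Q ^ (t + 5) * PowerSeries.mk f234 - Q ^ (t + 6) * PowerSeries.mk f234
      - Q ^ (t + 7) * PowerSeries.mk f234 - Q ^ (t + 8) * PowerSeries.mk f234
      + Q ^ (2 * t + 9) * ((Q ^ 2 + Q ^ 3 + 2 * Q ^ 4 + Q ^ 5 + Q ^ 6
        - Q ^ (t + 9) - Q ^ (t + 10) - Q ^ (t + 11) - Q ^ (t + 12)
        + Q ^ (2 * t + 17)) * PowerSeries.mk f234) := by
    ring
  have e' : (1 - Q) * gaussSeries 4 (t + 4) =
      gaussSeries 4 (t + 4) - Q ^ 1 * gaussSeries 4 (t + 4) := by ring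
  rw [e, e'] at h
  simp only [map_add, map_sub, PowerSeries.coeff_X_pow_mul', PowerSeries.coeff_mk,
    gaussSeries] at h
  rw [if_pos (by omega), if_pos (by omega), if_pos (by omega), if_pos (by omega),
    if_pos (by omega), if_neg (by omega), add_zero] at h
  have e1 : 2 * t + 8 - (t + 5) = t + 3 := by omega
  have e2 : 2 * t + 8 - (t + 6) = t + 2 := by omega
  have e3 : 2 * t + 8 - (t + 7) = t + 1 := by omega
  have e4 : 2 * t + 8 - (t + 8) = t := by omega
  rw [e1, e2, e3, e4] at h
  exact h

theorem f234_combo (t : ℕ) :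
    f234 (2 * t + 8) - f234 (t + 3) - f234 (t + 2) - f234 (t + 1) - f234 t = g23 (t + 4) := by
  induction t using Nat.twoStepInduction with
  | zero => decide
  | one => decide
  | more t ih _ =>
    have a1 : f234 (2 * (t + 2) + 8) = f234 (2 * t + 8) + g23 (2 * t + 12) := rfl
    have a2 : f234 (t + 2 + 3) = f234 (t + 1) + g23 (t + 5) := rfl
    have a3 : f234 (t + 2 + 2) = f234 t + g23 (t + 4) := rfl
    have a4 : f234 (t + 2 + 1) = f234 (t + 3) := rfl
    have a5 : g23 (2 * t + 12) - g23 (t + 5) = g23 (t + 2 + 4) := by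
      simp only [g23]
      split_ifs <;> omega
    rw [a1, a2, a3, a4]
    linarith

end aux

/-- The difference `p_{2t}(4,t) − p_{2t−1}(4,t)` grows linearly in `t`: there exist
constants `c₁, c₂ > 0` and `t₀` such that for all `t ≥ t₀`,
`c₁·t ≤ p_{2t}(4,t) − p_{2t−1}(4,t) ≤ c₂·t`. -/
theorem qbinomial_diff_linear_growth :
    ∃ c₁ c₂ : ℝ, c₁ > 0 ∧ c₂ > 0 ∧ ∃ t₀ : ℕ, ∀ t : ℕ, t₀ ≤ t →
      c₁ * (t : ℝ) ≤ ((rectPartitions (2 * t) 4 t : ℝ) - (rectPartitions (2 * t - 1) 4 t : ℝ)) ∧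
      ((rectPartitions (2 * t) 4 t : ℝ) - (rectPartitions (2 * t - 1) 4 t : ℝ)) ≤ c₂ * (t : ℝ) := by
  refine ⟨1 / 12, 1, by norm_num, by norm_num, 4, fun t ht => ?_⟩
  obtain ⟨t, rfl⟩ := Nat.exists_eq_add_of_le' ht
  have h := (diff_formula t).trans (f234_combo t)
  have hR : (rectPartitions (2 * (t + 4)) 4 (t + 4) : ℝ)
      - rectPartitions (2 * (t + 4) - 1) 4 (t + 4) = ((g23 (t + 4) : ℤ) : ℝ) := by
    rw [← h]
    push_cast
    ring
  rw [hR]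
  have b1 : ((t + 4 : ℕ) : ℤ) ≤ 12 * g23 (t + 4) := by
    simp only [g23]
    split_ifs <;> omega
  have b2 : g23 (t + 4) ≤ ((t + 4 : ℕ) : ℤ) := by
    simp only [g23]
    split_ifs <;> omega
  have b1' : ((t + 4 : ℕ) : ℝ) ≤ 12 * ((g23 (t + 4) : ℤ) : ℝ) := by exact_mod_cast b1
  have b2' : ((g23 (t + 4) : ℤ) : ℝ) ≤ ((t + 4 : ℕ) : ℝ) := by exact_mod_cast b2
  constructor <;> linarith
end
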